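/- Let 0<s<1, let Ω satisfy (H), and let a,b>0. Then there exists a constant C∈ℝ such that for every x∈supp ρ_{a,b}, ∫_{ℝ²} ( |x−y|^{−s}·Ω(θ(x−y)) + A(a,b)·(x₁−y₁)² + B(a,b)·(x₂−y₂)² + 2·D(a,b)·(x₁−y₁)(x₂−y₂) ) dρ_{a,b}(y) = C. Moreover, if Ω̃(φ)≥0 for all φ, then this integral is ≥ C for every x∈ℝ², i.e. it attains its global minimum on supp ρ_{a,b}. -/

import Mathlib

/-!
The kernel is decomposed into plane waves: with `e_φ = (cos φ, sin φ)`,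
`|z|^{-s} Ω(θ(z)) = τ_s ∫ |z · e_φ|^{-s} Ω̃(φ) dφ` (lemmas `inversion` and `kernel_eq`). On the
circle this says that convolution with `|sin|^{-s}` inverts the regularised convolution with
`|sin|^{s-2}` that defines `Ω̃`. Both act diagonally on `exp (2 i n t)`; integration by parts gives
recursions in `n` for the two families of multipliers, so their product is constant in `n`, and its
value at `n = 0` is a Gamma function identity (`lam_mul`). Uniqueness of Fourier coefficients then
yields the inversion.

By Fubini the potential of `ρ_{a,b}` is the superposition over `φ` of the potentials of its
projections onto the lines spanned by `e_φ`. Each projection is a multiple of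
`(κ² R₂² - t²)^{(1+s)/2}`, where `κ² = a² cos² φ + b² sin² φ` (`lintegral_rho2_proj`, `dirPot_eq`).

The one-dimensional Riesz potential of `(1 - u²)^{(1+s)/2}` equals a quadratic polynomial on
`[-1, 1]` and dominates it everywhere (`potF_inside`, `potF_ge`). To see this, write that weight as
a superposition over `r ∈ (0, 1)` of the equilibrium weights `(r² - u²)^{(s-1)/2}`, whose potential
is constant inside `(-r, r)`, by a Möbius substitution, and at most that constant outside.

The coefficients `A, B, D` are such that the confinement is, up to an additive constant, the
superposition of the opposite quadratic terms (`quad_eq`, `potConst_mul`). Inside the ellipse the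
projection of `x` lies within the projected support for every `φ`, so everything cancels up to a
constant (`dirPot_ge`, `msupport_dot_le`); if `Ω̃ ≥ 0`, the one-dimensional inequalities integrate
to the global lower bound.
-/

open MeasureTheory Real Filter Set Topology
open scoped ENNReal

noncomputable section

namespace Aniso

/-- The Euclidean norm on `ℝ × ℝ`. -/
def nrm (x : ℝ × ℝ) : ℝ := Real.sqrt (x.1 ^ 2 + x.2 ^ 2)

/-- The angle `θ(x) ∈ [-π, π)` of a nonzero point `x ∈ ℝ²`,
so that `x / |x| = (cos (ang x), sin (ang x))`. -/
def ang (x : ℝ × ℝ) : ℝ :=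
  if Complex.arg ⟨x.1, x.2⟩ = π then -π else Complex.arg ⟨x.1, x.2⟩

/-- The unit vector `e_φ = (cos φ, sin φ)`. -/
def eVec (φ : ℝ) : ℝ × ℝ := (Real.cos φ, Real.sin φ)

/-- The constant `τ_s = (2π)^{-s} Γ(s) cos(sπ/2)`. -/
def tauC (s : ℝ) : ℝ := (2 * π) ^ (-s) * Real.Gamma s * Real.cos (s * π / 2)

/-- The constant `c_s = π^{s-1} Γ((2-s)/2) / Γ(s/2)`. -/
def cC (s : ℝ) : ℝ := π ^ (s - 1) * Real.Gamma ((2 - s) / 2) / Real.Gamma (s / 2)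

/-- Hypothesis (H): `Ω` is smooth, 2π-periodic, strictly positive and π-periodic. -/
def SatisfiesH (Ω : ℝ → ℝ) : Prop :=
  ContDiff ℝ (⊤ : ℕ∞) Ω ∧ (∀ θ, Ω (θ + 2 * π) = Ω θ) ∧ (∀ θ, 0 < Ω θ) ∧ ∀ θ, Ω (θ + π) = Ω θ

/-- Hypothesis (h): `ω` is smooth, 2π-periodic, nonnegative, not identically zero,
π-periodic, and `ω(π/2) = 0`. -/
def Satisfiesh (ω : ℝ → ℝ) : Prop :=
  ContDiff ℝ (⊤ : ℕ∞) ω ∧ (∀ θ, ω (θ + 2 * π) = ω θ) ∧ (∀ θ, 0 ≤ ω θ) ∧ (∃ θ, ω θ ≠ 0) ∧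
    (∀ θ, ω (θ + π) = ω θ) ∧ ω (π / 2) = 0

/-- The transformed angle function `Ω̃`. -/
def Omt (s : ℝ) (Ω : ℝ → ℝ) (φ : ℝ) : ℝ :=
  tauC (2 - s) * (∫ θ in (-π)..π, |Real.cos (φ - θ)| ^ (-2 + s) * (Ω θ - Ω (φ + π / 2)))
    + cC s * Ω (φ + π / 2)

/-- The interaction potential `W(x) = |x|^{-s} Ω(θ(x)) + |x|²` as an `[0,∞]`-valued
kernel, with `W(0) = ∞`. -/
def Wkernel (s : ℝ) (Ω : ℝ → ℝ) (x : ℝ × ℝ) : ℝ≥0∞ :=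
  if x = 0 then ⊤ else ENNReal.ofReal (nrm x ^ (-s) * Ω (ang x) + nrm x ^ 2)

/-- The interaction energy `E[ρ] = (1/2) ∬ W(x-y) dρ(y) dρ(x) ∈ [0,∞]`. -/
def energy (s : ℝ) (Ω : ℝ → ℝ) (ρ : Measure (ℝ × ℝ)) : ℝ≥0∞ :=
  (1 / 2 : ℝ≥0∞) * ∫⁻ x, ∫⁻ y, Wkernel s Ω (x - y) ∂ρ ∂ρ

/-- The real-valued interaction potential (with junk value `0` at the origin,
which is Lebesgue negligible). -/
def Wr (s : ℝ) (Ω : ℝ → ℝ) (x : ℝ × ℝ) : ℝ := nrm x ^ (-s) * Ω (ang x) + nrm x ^ 2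

/-- `ρ` minimizes the energy `E` among probability measures on `ℝ²`. -/
def IsMinimizer (E : Measure (ℝ × ℝ) → ℝ≥0∞) (ρ : Measure (ℝ × ℝ)) : Prop :=
  IsProbabilityMeasure ρ ∧ ∀ μ : Measure (ℝ × ℝ), IsProbabilityMeasure μ → E ρ ≤ E μ

/-- `ρ` is the unique minimizer of `E` up to translation: it is a minimizer and every
minimizer is a translate of it. -/
def IsUniqueMinimizer (E : Measure (ℝ × ℝ) → ℝ≥0∞) (ρ : Measure (ℝ × ℝ)) : Prop :=
  IsMinimizer E ρ ∧ ∀ μ, IsMinimizer E μ → ∃ v : ℝ × ℝ, μ = Measure.map (fun x => x + v) ρ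

def R2 (s : ℝ) : ℝ := (8 * Real.sin (s * π / 2) / (s ^ 2 * (2 + s) * π)) ^ (-(1 / (s + 2)))

def C2 (s : ℝ) : ℝ := 4 * Real.sin (s * π / 2) / (s ^ 2 * π ^ 2)

/-- The density `ρ₂(x) = C₂ (R₂² - |x|²)₊^{s/2}`. -/
def rho2 (s : ℝ) (x : ℝ × ℝ) : ℝ := C2 s * (max (R2 s ^ 2 - nrm x ^ 2) 0) ^ (s / 2)

def rho2meas (s : ℝ) : Measure (ℝ × ℝ) := volume.withDensity fun x => ENNReal.ofReal (rho2 s x)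

/-- Counterclockwise rotation of `ℝ²` by the angle `η`. -/
def Rot (η : ℝ) (x : ℝ × ℝ) : ℝ × ℝ :=
  (x.1 * Real.cos η - x.2 * Real.sin η, x.1 * Real.sin η + x.2 * Real.cos η)

/-- The measure `ρ_{a,b,η}`: the pushforward of `ρ₂(x) dx` under `x ↦ R_η (a x₁, b x₂)`. -/
def rhoE (s a b η : ℝ) : Measure (ℝ × ℝ) :=
  Measure.map (fun x => Rot η (a * x.1, b * x.2)) (rho2meas s)

/-- The measure `ρ_{a,b} = ρ_{a,b,0}`. -/
def rhoAB (s a b : ℝ) : Measure (ℝ × ℝ) := rhoE s a b 0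

/-- The Beta function. -/
def BetaR (x y : ℝ) : ℝ := Real.Gamma x * Real.Gamma y / Real.Gamma (x + y)

def C1 (s : ℝ) : ℝ := 2 * Real.cos (s * π / 2) / (s * (s + 1) * π)

def R1 (s : ℝ) : ℝ := (C1 s * BetaR (1 / 2) ((3 + s) / 2)) ^ (-(1 / (s + 2)))

/-- The density `ρ₁(t) = C₁ (R₁² - t²)₊^{(1+s)/2}` on `ℝ`. -/
def rho1 (s t : ℝ) : ℝ := C1 s * (max (R1 s ^ 2 - t ^ 2) 0) ^ ((1 + s) / 2)

def rho1meas (s : ℝ) : Measure ℝ := volume.withDensity fun t => ENNReal.ofReal (rho1 s t)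

/-- The measure `ρ_{1D}`: the pushforward of `ρ₁(t) dt` under `t ↦ (0, t)`. -/
def rho1D (s : ℝ) : Measure (ℝ × ℝ) := Measure.map (fun t : ℝ => ((0 : ℝ), t)) (rho1meas s)

/-- The support of a measure: points all of whose neighborhoods have positive measure. -/
def msupport {α : Type*} [TopologicalSpace α] [MeasurableSpace α] (μ : Measure α) : Set α :=
  {x | ∀ U ∈ 𝓝 x, 0 < μ U}

def Acoef (s : ℝ) (Ω : ℝ → ℝ) (a b : ℝ) : ℝ :=
  tauC s * (R1 s / R2 s) ^ (2 + s) *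
    ∫ φ in (-π)..π,
      (a ^ 2 * Real.cos φ ^ 2 + b ^ 2 * Real.sin φ ^ 2) ^ (-(2 + s) / 2) *
        Real.cos φ ^ 2 * Omt s Ω φ

def Bcoef (s : ℝ) (Ω : ℝ → ℝ) (a b : ℝ) : ℝ :=
  tauC s * (R1 s / R2 s) ^ (2 + s) *
    ∫ φ in (-π)..π,
      (a ^ 2 * Real.cos φ ^ 2 + b ^ 2 * Real.sin φ ^ 2) ^ (-(2 + s) / 2) *
        Real.sin φ ^ 2 * Omt s Ω φ

def Dcoef (s : ℝ) (Ω : ℝ → ℝ) (a b : ℝ) : ℝ :=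
  tauC s * (R1 s / R2 s) ^ (2 + s) *
    ∫ φ in (-π)..π,
      (a ^ 2 * Real.cos φ ^ 2 + b ^ 2 * Real.sin φ ^ 2) ^ (-(2 + s) / 2) *
        (Real.cos φ * Real.sin φ) * Omt s Ω φ

def Mfun (s : ℝ) (Ω : ℝ → ℝ) (a b : ℝ) : ℝ :=
  tauC s * (R1 s / R2 s) ^ (2 + s) *
    ∫ φ in (-π)..π, (a ^ 2 * Real.cos φ ^ 2 + b ^ 2 * Real.sin φ ^ 2) ^ (-s / 2) * Omt s Ω φ

def calE (s : ℝ) (Ω : ℝ → ℝ) (a b : ℝ) : ℝ := Mfun s Ω a b + s / 2 * (a ^ 2 + b ^ 2)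

/-- A measure has compact support. -/
def HasCompactSupportM (ρ : Measure (ℝ × ℝ)) : Prop :=
  ∃ K : Set (ℝ × ℝ), IsCompact K ∧ ρ Kᶜ = 0

/-- The linear interpolation `(1-t) ρ₀ + t ρ₁`. -/
def mix (ρ₀ ρ₁ : Measure (ℝ × ℝ)) (t : ℝ) : Measure (ℝ × ℝ) :=
  ENNReal.ofReal (1 - t) • ρ₀ + ENNReal.ofReal t • ρ₁

/-- Linear interpolation convexity (LIC): for any two distinct compactly supported
probability measures of finite energy with the same center of mass, the energy is
strictly convex along their linear interpolation. -/
def LIC (s : ℝ) (Ω : ℝ → ℝ) : Prop :=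
  ∀ ρ₀ ρ₁ : Measure (ℝ × ℝ), IsProbabilityMeasure ρ₀ → IsProbabilityMeasure ρ₁ →
    HasCompactSupportM ρ₀ → HasCompactSupportM ρ₁ →
    energy s Ω ρ₀ < ⊤ → energy s Ω ρ₁ < ⊤ → ρ₀ ≠ ρ₁ →
    (∫ x, x ∂ρ₀) = (∫ x, x ∂ρ₁) →
    StrictConvexOn ℝ (Set.Icc (0 : ℝ) 1) fun t => (energy s Ω (mix ρ₀ ρ₁ t)).toReal

/-- The interaction energy of a bounded compactly supported signed density. -/
def energyR (s : ℝ) (Ω : ℝ → ℝ) (μ : ℝ × ℝ → ℝ) : ℝ :=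
  (1 / 2) * ∫ x : ℝ × ℝ, (∫ y : ℝ × ℝ, Wr s Ω (x - y) * μ y) * μ x

/-- The logarithmic potential `W_log(x) = -ln|x| + Ω(θ(x)) + |x|²` (real valued,
with junk value at the origin). -/
def Wlog (Ω : ℝ → ℝ) (x : ℝ × ℝ) : ℝ := -Real.log (nrm x) + Ω (ang x) + nrm x ^ 2

def WlogKernel (Ω : ℝ → ℝ) (x : ℝ × ℝ) : ℝ≥0∞ :=
  if x = 0 then ⊤ else ENNReal.ofReal (Wlog Ω x)

/-- The logarithmic interaction energy. -/
def energyLog (Ω : ℝ → ℝ) (ρ : Measure (ℝ × ℝ)) : ℝ≥0∞ :=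
  (1 / 2 : ℝ≥0∞) * ∫⁻ x, ∫⁻ y, WlogKernel Ω (x - y) ∂ρ ∂ρ

/-- The family `W_{(s)}(x) = |x|^{-s} (1/s + Ω(θ(x))) - 1/s + |x|²`. -/
def Wsfam (s : ℝ) (Ω : ℝ → ℝ) (x : ℝ × ℝ) : ℝ :=
  nrm x ^ (-s) * (1 / s + Ω (ang x)) - 1 / s + nrm x ^ 2

/-- The transformed angle function of `W_{(s)}`. -/
def Omts (s : ℝ) (Ω : ℝ → ℝ) (φ : ℝ) : ℝ :=
  tauC (2 - s) * (∫ θ in (-π)..π, |Real.cos (φ - θ)| ^ (-2 + s) * (Ω θ - Ω (φ + π / 2)))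
    + cC s * (1 / s + Ω (φ + π / 2))

/-- The truncated integral appearing in the principal value defining `Ω̃_log`. -/
def pvInt (Ω : ℝ → ℝ) (φ δ : ℝ) : ℝ :=
  ∫ θ in {θ : ℝ | θ ∈ Set.Icc (-π) π ∧ δ ≤ |Real.cos (φ - θ)|},
    |Real.cos (φ - θ)| ^ (-(2 : ℝ)) * (Ω θ - Ω (φ + π / 2))

def OmtLogFam (Ω : ℝ → ℝ) (φ δ : ℝ) : ℝ :=
  -((2 * π) ^ (-(2 : ℝ))) * pvInt Ω φ δ + (2 * π)⁻¹

/-- The transformed angle function `Ω̃_log`, defined as the principal value limit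
(via `limUnder`, which returns the limit whenever it exists). -/
def OmtLog (Ω : ℝ → ℝ) (φ : ℝ) : ℝ := limUnder (𝓝[>] (0 : ℝ)) (OmtLogFam Ω φ)

/-- The closed elliptical region `B(0; a, b)`. -/
def ellipseSet (a b : ℝ) : Set (ℝ × ℝ) := {x | x.1 ^ 2 / a ^ 2 + x.2 ^ 2 / b ^ 2 ≤ 1}

def ALog (Ω : ℝ → ℝ) (a b : ℝ) : ℝ :=
  ∫ φ in (-π)..π,
    (a ^ 2 * Real.cos φ ^ 2 + b ^ 2 * Real.sin φ ^ 2)⁻¹ * Real.cos φ ^ 2 * OmtLog Ω φ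

def BLog (Ω : ℝ → ℝ) (a b : ℝ) : ℝ :=
  ∫ φ in (-π)..π,
    (a ^ 2 * Real.cos φ ^ 2 + b ^ 2 * Real.sin φ ^ 2)⁻¹ * Real.sin φ ^ 2 * OmtLog Ω φ

def DLog (Ω : ℝ → ℝ) (a b : ℝ) : ℝ :=
  ∫ φ in (-π)..π,
    (a ^ 2 * Real.cos φ ^ 2 + b ^ 2 * Real.sin φ ^ 2)⁻¹ *
      (Real.cos φ * Real.sin φ) * OmtLog Ω φ

/-- The uniform probability measure on the rotated ellipse `B(0; a, b, η)`. -/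
def unifEllipse (a b η : ℝ) : Measure (ℝ × ℝ) :=
  volume.withDensity ((Rot η '' ellipseSet a b).indicator fun _ => ENNReal.ofReal ((π * a * b)⁻¹))

/-- The pushforward of the density `(2/(πb²)) (b² - t²)₊^{1/2} dt` under `t ↦ R_η (0, t)`. -/
def semicirc (b η : ℝ) : Measure (ℝ × ℝ) :=
  Measure.map (fun t : ℝ => Rot η (0, t))
    (volume.withDensity fun t =>
      ENNReal.ofReal (2 / (π * b ^ 2) * (max (b ^ 2 - t ^ 2) 0) ^ ((1 : ℝ) / 2)))

/-- The vertical semicircle measure `ρ_{1D}` for the logarithmic case. -/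
def rho1Dlog : Measure (ℝ × ℝ) :=
  Measure.map (fun t : ℝ => ((0 : ℝ), t))
    (volume.withDensity fun t => ENNReal.ofReal (2 / π * (max (1 - t ^ 2) 0) ^ ((1 : ℝ) / 2)))

/-- The measure `ψ(t) dt` placed on the vertical axis. -/
def rhoPsi (ψ : ℝ → ℝ) : Measure (ℝ × ℝ) :=
  Measure.map (fun t : ℝ => ((0 : ℝ), t)) (volume.withDensity fun t => ENNReal.ofReal (ψ t))

/-! ### Beta integrals -/

lemma lintegral_beta {p q : ℝ} (hp : 0 < p) (hq : 0 < q) :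
    ∫⁻ x in Ioo (0 : ℝ) 1, ENNReal.ofReal (x ^ (p - 1) * (1 - x) ^ (q - 1)) =
      ENNReal.ofReal (BetaR p q) := by
  have hB : 0 < BetaR p q := ProbabilityTheory.beta_pos hp hq
  have h := ProbabilityTheory.lintegral_betaPDF_eq_one hp hq
  rw [ProbabilityTheory.lintegral_betaPDF] at h
  have e : ∀ x : ℝ, ENNReal.ofReal (1 / ProbabilityTheory.beta p q * x ^ (p - 1) *
      (1 - x) ^ (q - 1)) =
      ENNReal.ofReal (1 / BetaR p q) * ENNReal.ofReal (x ^ (p - 1) * (1 - x) ^ (q - 1)) := by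
    intro x
    rw [← ENNReal.ofReal_mul (by positivity), mul_assoc]
    rfl
  simp_rw [e] at h
  rw [lintegral_const_mul' _ _ ENNReal.ofReal_ne_top] at h
  calc _ = ENNReal.ofReal (BetaR p q) * (ENNReal.ofReal (1 / BetaR p q) *
        ∫⁻ x in Ioo (0 : ℝ) 1, ENNReal.ofReal (x ^ (p - 1) * (1 - x) ^ (q - 1))) := by
        rw [← mul_assoc, ← ENNReal.ofReal_mul hB.le, mul_one_div_cancel hB.ne',
          ENNReal.ofReal_one, one_mul]
    _ = _ := by rw [h, mul_one]

lemma lintegral_beta_sym {p q : ℝ} (hp : 0 < p) (hq : 0 < q) :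
    ∫⁻ u in Ioo (-1 : ℝ) 1, ENNReal.ofReal ((1 + u) ^ (p - 1) * (1 - u) ^ (q - 1)) =
      ENNReal.ofReal (2 ^ (p + q - 1) * BetaR p q) := by
  have himg : (fun x : ℝ => 2 * x - 1) '' Ioo 0 1 = Ioo (-1) 1 := by
    ext u
    constructor
    · rintro ⟨x, hx, rfl⟩
      exact ⟨by linarith [hx.1], by linarith [hx.2]⟩
    · intro hu
      exact ⟨(u + 1) / 2, ⟨by linarith [hu.1], by linarith [hu.2]⟩, by ring⟩
  rw [← himg, lintegral_image_eq_lintegral_abs_deriv_mul (f' := fun _ => 2) measurableSet_Ioo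
    (fun x _ => by simpa using (((hasDerivAt_id x).const_mul 2).sub_const 1).hasDerivWithinAt)
    (fun x _ y _ h => by simpa using h)]
  rw [ENNReal.ofReal_mul (by positivity), ← lintegral_beta hp hq,
    ← lintegral_const_mul' _ _ ENNReal.ofReal_ne_top]
  refine setLIntegral_congr_fun measurableSet_Ioo fun x hx => ?_
  rw [← ENNReal.ofReal_mul (by positivity), ← ENNReal.ofReal_mul (by positivity)]
  congr 1
  have h1 : 1 + (2 * x - 1) = 2 * x := by ring
  have h2 : 1 - (2 * x - 1) = 2 * (1 - x) := by ring
  rw [h1, h2, Real.mul_rpow (by norm_num) hx.1.le,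
    Real.mul_rpow (by norm_num) (by linarith [hx.2]), abs_of_pos two_pos]
  have h3 : (2 : ℝ) ^ (p + q - 1) = 2 * 2 ^ (p - 1) * 2 ^ (q - 1) := by
    rw [show p + q - 1 = 1 + (p - 1) + (q - 1) by ring, Real.rpow_add two_pos,
      Real.rpow_add two_pos, Real.rpow_one]
  rw [h3]; ring

/-- The duplication formula in terms of the Beta function. -/
lemma BetaR_dup {p : ℝ} (hp : 0 < p) : 2 ^ (p + p - 1) * BetaR p p = BetaR (1 / 2) p := by
  have h1 := Real.Gamma_mul_Gamma_add_half_of_pos hp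
  have g1 := Real.Gamma_pos_of_pos hp
  have g2 := Real.Gamma_pos_of_pos (show 0 < p + 1 / 2 by positivity)
  have g3 := Real.Gamma_pos_of_pos (show 0 < 2 * p by positivity)
  have h2 : (2 : ℝ) ^ (p + p - 1) * 2 ^ (1 - 2 * p) = 1 := by
    rw [← Real.rpow_add two_pos, show p + p - 1 + (1 - 2 * p) = 0 by ring, Real.rpow_zero]
  unfold BetaR
  rw [Real.Gamma_one_half_eq, show p + p = 2 * p by ring, show 1 / 2 + p = p + 1 / 2 by ring,
    show 2 * p - 1 = p + p - 1 by ring]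
  rw [eq_div_iff g2.ne', mul_div_assoc', div_mul_eq_mul_div, div_eq_iff g3.ne']
  calc _ = 2 ^ (p + p - 1) * (Gamma p * Gamma (p + 1 / 2)) * Gamma p := by ring
    _ = (2 ^ (p + p - 1) * 2 ^ (1 - 2 * p)) * Gamma (2 * p) * √π * Gamma p := by rw [h1]; ring
    _ = _ := by rw [h2]; ring

lemma lintegral_one_sub_sq {p : ℝ} (hp : 0 < p) :
    ∫⁻ u in Ioo (-1 : ℝ) 1, ENNReal.ofReal ((1 - u ^ 2) ^ (p - 1)) =
      ENNReal.ofReal (BetaR (1 / 2) p) := by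
  rw [← BetaR_dup hp, ← lintegral_beta_sym hp hp]
  refine setLIntegral_congr_fun measurableSet_Ioo fun u hu => ?_
  rw [← Real.mul_rpow (by linarith [hu.1]) (by linarith [hu.2])]
  congr 2; ring

/-- The reflection formula in terms of the Beta function. -/
lemma BetaR_refl {s : ℝ} : BetaR ((1 - s) / 2) ((1 + s) / 2) = π / Real.cos (s * π / 2) := by
  unfold BetaR
  rw [show (1 - s) / 2 + (1 + s) / 2 = 1 by ring, Real.Gamma_one, div_one,
    show (1 + s) / 2 = 1 - (1 - s) / 2 by ring, Real.Gamma_mul_Gamma_one_sub,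
    show π * ((1 - s) / 2) = π / 2 - s * π / 2 by ring, Real.sin_pi_div_two_sub]

lemma setLIntegral_neg_Ioo (f : ℝ → ℝ≥0∞) :
    ∫⁻ u in Ioo (-1 : ℝ) 1, f (-u) = ∫⁻ u in Ioo (-1 : ℝ) 1, f u := by
  have himg : (fun x : ℝ => -x) '' Ioo (-1) 1 = Ioo (-1) 1 := by simp
  conv_rhs => rw [← himg]
  rw [lintegral_image_eq_lintegral_abs_deriv_mul (f' := fun _ => -1) measurableSet_Ioo
    (fun x _ => by simpa using (hasDerivAt_neg x).hasDerivWithinAt)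
    (fun x _ y _ h => by simpa using h)]
  simp

lemma lintegral_abs_mul_sq (h : ℝ → ℝ≥0∞) :
    ∫⁻ u in Ioo (-1 : ℝ) 1, ENNReal.ofReal |u| * h (u ^ 2) = ∫⁻ x in Ioo (0 : ℝ) 1, h x := by
  have himg : (fun x : ℝ => x ^ 2) '' Ioo 0 1 = Ioo 0 1 := by
    ext u
    constructor
    · rintro ⟨x, hx, rfl⟩
      exact ⟨by have := hx.1; positivity, by nlinarith [hx.1, hx.2]⟩
    · intro hu
      exact ⟨√u, ⟨Real.sqrt_pos.2 hu.1, by rw [Real.sqrt_lt' one_pos]; linarith [hu.2]⟩,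
        Real.sq_sqrt hu.1.le⟩
  have h1 : ∫⁻ x in Ioo (0 : ℝ) 1, h x =
      2 * ∫⁻ u in Ioo (0 : ℝ) 1, ENNReal.ofReal |u| * h (u ^ 2) := by
    conv_lhs => rw [← himg]
    rw [lintegral_image_eq_lintegral_abs_deriv_mul (f' := fun x => 2 * x) measurableSet_Ioo
      (fun x _ => by simpa using (hasDerivAt_pow 2 x).hasDerivWithinAt)
      (fun x hx y hy h => by
        exact (pow_left_inj₀ hx.1.le hy.1.le two_ne_zero).1 h),
      ← lintegral_const_mul' _ _ (by simp)]
    refine setLIntegral_congr_fun measurableSet_Ioo fun x hx => ?_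
    rw [abs_mul, ENNReal.ofReal_mul (by positivity), mul_assoc]
    simp
  have hneg : ∫⁻ u in Ioo (-1 : ℝ) 0, ENNReal.ofReal |u| * h (u ^ 2) =
      ∫⁻ u in Ioo (0 : ℝ) 1, ENNReal.ofReal |u| * h (u ^ 2) := by
    have himg : (fun x : ℝ => -x) '' Ioo 0 1 = Ioo (-1) 0 := by simp
    rw [← himg, lintegral_image_eq_lintegral_abs_deriv_mul (f' := fun _ => -1) measurableSet_Ioo
      (fun x _ => by simpa using (hasDerivAt_neg x).hasDerivWithinAt)
      (fun x _ y _ h => by simpa using h)]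
    simp
  have hsplit : Ioo (-1 : ℝ) 1 =ᵐ[volume] (Ioo (-1 : ℝ) 0 ∪ Ioo 0 1 : Set ℝ) := by
    rw [← Ioc_union_Ioo_eq_Ioo (show (-1 : ℝ) ≤ 0 by norm_num) one_pos]
    exact (Ioo_ae_eq_Ioc.symm).union (ae_eq_refl _)
  rw [setLIntegral_congr hsplit, lintegral_union measurableSet_Ioo, hneg, h1, two_mul]
  rw [Set.disjoint_left]
  intro x hx hx'
  linarith [hx.2, hx'.1]

/-! ### The equilibrium weight on an interval -/

/-- The Riesz potential of order `s` of the arcsine-type weight `(1 - u²)^{(s-1)/2}` on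
`(-1, 1)`, as an extended nonnegative number. -/
def potP (s t : ℝ) : ℝ≥0∞ :=
  ∫⁻ u in Ioo (-1 : ℝ) 1, ENNReal.ofReal ((1 - u ^ 2) ^ ((s - 1) / 2) * |t - u| ^ (-s))

/-- The Möbius substitution `y = (1 - z) x / (1 - z x)` of `(0, 1)` turns this integral into a
Beta integral, independent of `z`. -/
lemma lintegral_moebius {p z : ℝ} (hp : 0 < p) (hp1 : p < 1) (hz0 : 0 ≤ z) (hz : z < 1) :
    ∫⁻ x in Ioo (0 : ℝ) 1,
      ENNReal.ofReal ((1 - z) ^ p * x ^ (p - 1) * (1 - x) ^ (-p) / (1 - z * x)) =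
      ENNReal.ofReal (BetaR p (1 - p)) := by
  have hd : ∀ x ∈ Ioo (0 : ℝ) 1, 0 < 1 - z * x := fun x hx => by nlinarith [hx.1, hx.2]
  have himg : (fun x : ℝ => (1 - z) * x / (1 - z * x)) '' Ioo 0 1 = Ioo 0 1 := by
    ext y
    constructor
    · rintro ⟨x, hx, rfl⟩
      have := hd x hx
      refine ⟨div_pos (mul_pos (by linarith) hx.1) this, ?_⟩
      simp only
      rw [div_lt_one this]; linarith [hx.2]
    · intro hy
      have h1 : 0 < 1 - z + z * y := by nlinarith [hy.1, hy.2]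
      refine ⟨y / (1 - z + z * y), ⟨div_pos hy.1 h1, ?_⟩, ?_⟩
      · rw [div_lt_one h1]; nlinarith [hy.1, hy.2]
      · have h2 : 1 - z * (y / (1 - z + z * y)) = (1 - z) / (1 - z + z * y) := by
          field_simp; ring
        have h3 : 1 - z ≠ 0 := by linarith
        simp only
        rw [h2]; field_simp
  rw [← lintegral_beta hp (show 0 < 1 - p by linarith)]
  conv_rhs => rw [← himg]
  rw [lintegral_image_eq_lintegral_abs_deriv_mul (f' := fun x => (1 - z) / (1 - z * x) ^ 2)
    measurableSet_Ioo]
  · refine setLIntegral_congr_fun measurableSet_Ioo fun x hx => ?_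
    have h1 := hd x hx
    have h2 : (0 : ℝ) < 1 - z := by linarith
    have h3 : (0 : ℝ) < 1 - x := by linarith [hx.2]
    have h0 := hx.1
    have h4 : 1 - (1 - z) * x / (1 - z * x) = (1 - x) / (1 - z * x) := by
      field_simp; ring
    rw [← ENNReal.ofReal_mul (by positivity), h4, abs_of_pos (by positivity)]
    congr 1
    rw [Real.div_rpow (by positivity) h1.le, Real.mul_rpow h2.le h0.le,
      Real.div_rpow h3.le h1.le]
    have e1 : (1 - z) ^ p = (1 - z) * (1 - z) ^ (p - 1) := by
      rw [← Real.rpow_one_add' h2.le (by linarith)]; congr 1; ring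
    have e2 : (1 - z * x) ^ (p - 1) * (1 - z * x) ^ (1 - p - 1) * (1 - z * x) = 1 := by
      rw [← Real.rpow_add h1, ← Real.rpow_add_one h1.ne',
        show p - 1 + (1 - p - 1) + 1 = 0 by ring, Real.rpow_zero]
    have e3 : (1 - x) ^ (-p) = (1 - x) ^ (1 - p - 1) := by congr 1; ring
    rw [e1, e3]
    have p1 : 0 < (1 - z * x) ^ (p - 1) := Real.rpow_pos_of_pos h1 _
    have p2 : 0 < (1 - z * x) ^ (1 - p - 1) := Real.rpow_pos_of_pos h1 _
    rw [div_mul_div_comm, div_mul_div_comm, div_eq_div_iff (by positivity) (by positivity)]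
    linear_combination ((1 - z) * (1 - z) ^ (p - 1) * x ^ (p - 1) * (1 - x) ^ (1 - p - 1) *
      (1 - z * x)) * e2
  · intro x hx
    have h1 := hd x hx
    have := (((hasDerivAt_id x).const_mul (1 - z)).div
      (((hasDerivAt_id x).const_mul z).const_sub 1) h1.ne').hasDerivWithinAt (s := Ioo 0 1)
    refine this.congr_deriv ?_
    simp; ring
  · intro x hx y hy h
    have h1 := hd x hx
    have h2 := hd y hy
    have h3 : 1 - z ≠ 0 := by linarith
    simp only at h
    rw [div_eq_div_iff h1.ne' h2.ne'] at h
    have : (1 - z) * (x - y) = 0 := by linear_combination h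
    rcases mul_eq_zero.1 this with h | h
    · exact absurd h h3
    · linarith

/-- The potential after a Möbius substitution of `(-1, 1)` that sends the evaluation point `t`
to `0`. -/
lemma potP_moebius {s t : ℝ} (hs0 : 0 < s) (hs1 : s < 1) (ht : |t| < 1) :
    potP s t = ∫⁻ v in Ioo (-1 : ℝ) 1,
      ENNReal.ofReal ((1 - t ^ 2) ^ ((1 - s) / 2) * (1 - v ^ 2) ^ ((s - 1) / 2) * |v| ^ (-s) /
        (1 - t * v)) := by
  rw [abs_lt] at ht
  have ht2 : 0 < 1 - t ^ 2 := by nlinarith [ht.1, ht.2]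
  have hd : ∀ v ∈ Ioo (-1 : ℝ) 1, 0 < 1 - t * v := fun v hv => by
    nlinarith [mul_pos (show 0 < 1 - t by linarith) (show 0 < 1 + v by linarith [hv.1]),
      mul_pos (show 0 < 1 + t by linarith) (show 0 < 1 - v by linarith [hv.2])]
  set f : ℝ → ℝ := fun v => (t - v) / (1 - t * v) with hf
  have hmaps : ∀ v ∈ Ioo (-1 : ℝ) 1, f v ∈ Ioo (-1 : ℝ) 1 := by
    intro v hv
    have := hd v hv
    constructor
    · rw [hf]; simp only; rw [lt_div_iff₀ this]
      nlinarith [mul_pos (show 0 < 1 + t by linarith) (show 0 < 1 - v by linarith [hv.2])]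
    · rw [hf]; simp only; rw [div_lt_one this]
      nlinarith [mul_pos (show 0 < 1 - t by linarith) (show 0 < 1 + v by linarith [hv.1])]
  have hinv : ∀ v ∈ Ioo (-1 : ℝ) 1, f (f v) = v := by
    intro v hv
    have h1 := hd v hv
    have h2 : 1 - t * ((t - v) / (1 - t * v)) = (1 - t ^ 2) / (1 - t * v) := by
      field_simp; ring
    simp only [hf]
    rw [h2]; field_simp; ring
  have himg : f '' Ioo (-1) 1 = Ioo (-1) 1 := by
    ext y
    constructor
    · rintro ⟨x, hx, rfl⟩
      exact hmaps x hx
    · intro hy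
      exact ⟨f y, hmaps y hy, hinv y hy⟩
  unfold potP
  conv_lhs => rw [← himg]
  rw [lintegral_image_eq_lintegral_abs_deriv_mul
    (f' := fun v => -((1 - t ^ 2) / (1 - t * v) ^ 2)) measurableSet_Ioo]
  · refine setLIntegral_congr_fun measurableSet_Ioo fun v hv => ?_
    have h1 := hd v hv
    have h3 : (0 : ℝ) < 1 - v ^ 2 := by nlinarith [hv.1, hv.2]
    have e1 : 1 - f v ^ 2 = (1 - t ^ 2) * (1 - v ^ 2) / (1 - t * v) ^ 2 := by
      simp only [hf]; field_simp; ring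
    have e2 : t - f v = (1 - t ^ 2) * v / (1 - t * v) := by
      simp only [hf]; field_simp; ring
    rw [← ENNReal.ofReal_mul (by positivity), e1, e2, abs_neg, abs_of_pos (by positivity),
      abs_div, abs_mul, abs_of_pos ht2, abs_of_pos h1]
    congr 1
    rw [Real.div_rpow (by positivity) (by positivity), Real.mul_rpow ht2.le h3.le,
      Real.div_rpow (by positivity) h1.le, Real.mul_rpow ht2.le (abs_nonneg v)]
    have e3 : (1 - t ^ 2) ^ ((1 - s) / 2) =
        (1 - t ^ 2) * (1 - t ^ 2) ^ ((s - 1) / 2) * (1 - t ^ 2) ^ (-s) := by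
      rw [← Real.rpow_one_add' ht2.le (by linarith), ← Real.rpow_add ht2]; congr 1; ring
    have e4 : (1 - t * v) = (1 - t * v) ^ 2 * ((1 - t * v) ^ 2) ^ ((s - 1) / 2) *
        (1 - t * v) ^ (-s) := by
      rw [← Real.rpow_natCast, ← Real.rpow_mul h1.le, ← Real.rpow_add h1, ← Real.rpow_add h1]
      conv_lhs => rw [← Real.rpow_one (1 - t * v)]
      congr 1; push_cast; ring
    rw [e3, div_mul_div_comm, div_mul_div_comm]
    conv_rhs => rw [e4]
    congr 1
    · ring
    · ring
  · intro v hv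
    have h1 := hd v hv
    have := (((hasDerivAt_id v).const_sub t).div
      (((hasDerivAt_id v).const_mul t).const_sub 1) h1.ne').hasDerivWithinAt (s := Ioo (-1) 1)
    refine this.congr_deriv ?_
    simp only [id]
    field_simp; ring
  · intro x hx y hy h
    rw [← hinv x hx, ← hinv y hy, h]

/-- The equilibrium property: the weight `(1 - u²)^{(s-1)/2}` has constant potential inside
`(-1, 1)`. -/
lemma potP_inside {s t : ℝ} (hs0 : 0 < s) (hs1 : s < 1) (ht : |t| < 1) :
    potP s t = ENNReal.ofReal (π / Real.cos (s * π / 2)) := by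
  have ht' := abs_lt.1 ht
  have ht2 : t ^ 2 < 1 := by nlinarith [ht'.1, ht'.2]
  have ht20 : 0 < 1 - t ^ 2 := by linarith
  have hd : ∀ v ∈ Ioo (-1 : ℝ) 1, 0 < 1 - t * v := fun v hv => by
    nlinarith [mul_pos (show 0 < 1 - t by linarith) (show 0 < 1 + v by linarith [hv.1]),
      mul_pos (show 0 < 1 + t by linarith) (show 0 < 1 - v by linarith [hv.2])]
  set G : ℝ → ℝ := fun v => (1 - t ^ 2) ^ ((1 - s) / 2) * (1 - v ^ 2) ^ ((s - 1) / 2) *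
    |v| ^ (-s) with hG
  have h1 : potP s t = ∫⁻ v in Ioo (-1 : ℝ) 1, ENNReal.ofReal (G v / (1 - t * v)) :=
    potP_moebius hs0 hs1 ht
  -- averaging over `v ↦ -v` makes the integrand a function of `v ^ 2`
  have h2 : potP s t = ∫⁻ v in Ioo (-1 : ℝ) 1, ENNReal.ofReal (G v / (1 + t * v)) := by
    rw [h1, ← setLIntegral_neg_Ioo]
    simp [hG]
  have h3 : 2 * potP s t =
      2 * ∫⁻ v in Ioo (-1 : ℝ) 1, ENNReal.ofReal (G v / (1 - t ^ 2 * v ^ 2)) := by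
    rw [two_mul]
    nth_rewrite 1 [h1]
    rw [h2, ← lintegral_add_left (by fun_prop), ← lintegral_const_mul' _ _ (by simp)]
    refine setLIntegral_congr_fun measurableSet_Ioo fun v hv => ?_
    have d1 := hd v hv
    have d2 := hd (-v) ⟨by linarith [hv.2], by linarith [hv.1]⟩
    have h3 : (0 : ℝ) < 1 - v ^ 2 := by nlinarith [hv.1, hv.2]
    have d3 : 1 - t ^ 2 * v ^ 2 = (1 - t * v) * (1 + t * v) := by ring
    have d4 : 0 < 1 + t * v := by linarith
    have hGv : 0 ≤ G v := by simp only [hG]; positivity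
    rw [← ENNReal.ofReal_add (by positivity) (by positivity), d3]
    rw [show (2 : ℝ≥0∞) = ENNReal.ofReal 2 by simp, ← ENNReal.ofReal_mul (by norm_num)]
    congr 1
    field_simp; ring
  have h4 := (ENNReal.mul_right_inj (by simp) (by simp)).1 h3
  rw [h4, ← BetaR_refl, show (1 + s) / 2 = 1 - (1 - s) / 2 by ring,
    ← lintegral_moebius (p := (1 - s) / 2) (z := t ^ 2) (by linarith) (by linarith)
      (sq_nonneg t) ht2, ← lintegral_abs_mul_sq]
  refine lintegral_congr_ae ?_
  have hne : ∀ᵐ v ∂(volume.restrict (Ioo (-1 : ℝ) 1)), v ≠ 0 :=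
    ae_restrict_of_ae (Measure.ae_ne volume 0)
  filter_upwards [hne, ae_restrict_mem measurableSet_Ioo] with v hv0 hv
  rw [← ENNReal.ofReal_mul (abs_nonneg v)]
  congr 1
  have e : |v| ^ (-s) = |v| * (v ^ 2) ^ ((1 - s) / 2 - 1) := by
    rw [← sq_abs v, ← Real.rpow_natCast, ← Real.rpow_mul (abs_nonneg v)]
    have := Real.rpow_add (abs_pos.2 hv0) 1 (((2 : ℕ) : ℝ) * ((1 - s) / 2 - 1))
    rw [Real.rpow_one] at this
    rw [← this]; congr 1; push_cast; ring
  simp only [hG]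
  rw [e, show -((1 - s) / 2) = (s - 1) / 2 by ring]
  ring

lemma potP_one {s : ℝ} (hs0 : 0 < s) (hs1 : s < 1) :
    potP s 1 = ENNReal.ofReal (π / Real.cos (s * π / 2)) := by
  rw [← BetaR_refl]
  have h := lintegral_beta_sym (p := (1 + s) / 2) (q := (1 - s) / 2) (by linarith) (by linarith)
  have e : BetaR ((1 + s) / 2) ((1 - s) / 2) = BetaR ((1 - s) / 2) ((1 + s) / 2) := by
    unfold BetaR; rw [mul_comm, add_comm ((1 + s) / 2)]
  rw [show (1 + s) / 2 + (1 - s) / 2 - 1 = 0 by ring, Real.rpow_zero, one_mul, e] at h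
  rw [← h]
  refine setLIntegral_congr_fun measurableSet_Ioo fun u hu => ?_
  have h1 : 0 < 1 - u := by linarith [hu.2]
  have h2 : 0 < 1 + u := by linarith [hu.1]
  congr 1
  rw [show 1 - u ^ 2 = (1 + u) * (1 - u) by ring, Real.mul_rpow h2.le h1.le, abs_of_pos h1,
    mul_assoc, ← Real.rpow_add h1]
  congr 2 <;> ring

/-- Outside the interval each distance `|t - u|` is at least the distance `|1 - u|` to the
endpoint, so the potential is at most its value at `1`. -/
lemma potP_outside {s t : ℝ} (hs0 : 0 < s) (hs1 : s < 1) (ht : 1 ≤ t) :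
    potP s t ≤ ENNReal.ofReal (π / Real.cos (s * π / 2)) := by
  rw [← potP_one hs0 hs1]
  refine setLIntegral_mono' measurableSet_Ioo fun u hu => ?_
  have h1 : 0 < 1 - u := by linarith [hu.2]
  have h3 : (0 : ℝ) < 1 - u ^ 2 := by nlinarith [hu.1, hu.2]
  refine ENNReal.ofReal_le_ofReal (mul_le_mul_of_nonneg_left ?_ (by positivity))
  rw [abs_of_pos h1, abs_of_pos (by linarith)]
  exact Real.rpow_le_rpow_of_nonpos h1 (by linarith) (by linarith)

/-! ### The potential of the layered weight on an interval -/

/-- The Riesz potential of order `s` of the weight `(1 - u²)^{(1+s)/2}` on `(-1, 1)`. -/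
def potF (s t : ℝ) : ℝ≥0∞ :=
  ∫⁻ u in Ioo (-1 : ℝ) 1, ENNReal.ofReal ((1 - u ^ 2) ^ ((1 + s) / 2) * |t - u| ^ (-s))

lemma lintegral_id_mul {α β c : ℝ} (hα : 0 ≤ α) (hαβ : α ≤ β) (hc : 0 ≤ c) :
    ∫⁻ r in Ioo α β, ENNReal.ofReal r * ENNReal.ofReal c =
      ENNReal.ofReal (c * (β ^ 2 - α ^ 2) / 2) := by
  have h : ∫ r in Ioo α β, r * c = c * (β ^ 2 - α ^ 2) / 2 := by
    rw [← integral_Ioc_eq_integral_Ioo, ← intervalIntegral.integral_of_le hαβ,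
      intervalIntegral.integral_mul_const, integral_id]
    ring
  rw [← h, ofReal_integral_eq_lintegral_ofReal]
  · refine setLIntegral_congr_fun measurableSet_Ioo fun r hr => ?_
    exact (ENNReal.ofReal_mul (hα.trans hr.1.le)).symm
  · exact ((continuous_id.mul continuous_const).integrableOn_Icc).mono_set Ioo_subset_Icc_self
  · refine ae_restrict_of_forall_mem measurableSet_Ioo fun r hr => ?_
    exact mul_nonneg (hα.trans hr.1.le) hc

/-- Layer decomposition of `(1 - u²)^{(1+s)/2}` into the weights `(r² - u²)^{(s-1)/2}`. -/
lemma lintegral_layer {s u : ℝ} (hs0 : 0 < s) (hu : |u| < 1) :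
    ∫⁻ r in Ioo |u| 1, ENNReal.ofReal ((1 + s) * r * (r ^ 2 - u ^ 2) ^ ((s - 1) / 2)) =
      ENNReal.ofReal ((1 - u ^ 2) ^ ((1 + s) / 2)) := by
  have hpos : ∀ r ∈ Ioo |u| 1, 0 < r ^ 2 - u ^ 2 := fun r hr => by
    rw [← sq_abs u]; nlinarith [hr.1, abs_nonneg u]
  have hderiv : ∀ r ∈ Ioo |u| 1, HasDerivAt (fun r : ℝ => (r ^ 2 - u ^ 2) ^ ((1 + s) / 2))
      ((1 + s) * r * (r ^ 2 - u ^ 2) ^ ((s - 1) / 2)) r := by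
    intro r hr
    have h1 : HasDerivAt (fun r : ℝ => r ^ 2 - u ^ 2) (2 * r) r := by
      simpa using (hasDerivAt_pow 2 r).sub_const (u ^ 2)
    have := h1.rpow_const (p := (1 + s) / 2) (Or.inl (hpos r hr).ne')
    refine this.congr_deriv ?_
    rw [show (1 + s) / 2 - 1 = (s - 1) / 2 by ring]; ring
  have hcont : ContinuousOn (fun r : ℝ => (r ^ 2 - u ^ 2) ^ ((1 + s) / 2)) (Icc |u| 1) := by
    refine ContinuousOn.rpow_const (by fun_prop) fun r _ => Or.inr (by linarith)
  have hnn : ∀ r ∈ Ioo |u| 1, 0 ≤ (1 + s) * r * (r ^ 2 - u ^ 2) ^ ((s - 1) / 2) := by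
    intro r hr
    have := hpos r hr
    have := (abs_nonneg u).trans hr.1.le
    positivity
  have hInteg := intervalIntegral.integrableOn_deriv_of_nonneg hcont hderiv hnn
  have hval := intervalIntegral.integral_eq_sub_of_hasDerivAt_of_le hu.le hcont hderiv
    ((intervalIntegrable_iff_integrableOn_Ioc_of_le hu.le).2 hInteg)
  rw [sq_abs, sub_self, Real.zero_rpow (by linarith), one_pow, sub_zero,
    intervalIntegral.integral_of_le hu.le, integral_Ioc_eq_integral_Ioo] at hval
  rw [← hval, ofReal_integral_eq_lintegral_ofReal (hInteg.mono_set Ioo_subset_Ioc_self)]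
  exact ae_restrict_of_forall_mem measurableSet_Ioo hnn

/-- Scaling form of `potP` on `(-r, r)`. -/
lemma potP_scale {s t r : ℝ} (hs0 : 0 < s) (hr : 0 < r) :
    ∫⁻ u in Ioo (-r) r, ENNReal.ofReal ((1 + s) * r * (r ^ 2 - u ^ 2) ^ ((s - 1) / 2)) *
      ENNReal.ofReal (|t - u| ^ (-s)) = ENNReal.ofReal ((1 + s) * r) * potP s (t / r) := by
  have himg : (fun x : ℝ => r * x) '' Ioo (-1) 1 = Ioo (-r) r := by
    rw [Set.image_mul_left_Ioo hr]; simp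
  rw [← himg, lintegral_image_eq_lintegral_abs_deriv_mul (f' := fun _ => r) measurableSet_Ioo
    (fun x _ => by simpa using ((hasDerivAt_id x).const_mul r).hasDerivWithinAt)
    (fun x _ y _ h => by simpa [hr.ne'] using h), potP,
    ← lintegral_const_mul' _ _ ENNReal.ofReal_ne_top]
  refine setLIntegral_congr_fun measurableSet_Ioo fun v hv => ?_
  have h3 : (0 : ℝ) < 1 - v ^ 2 := by nlinarith [hv.1, hv.2]
  have h4 : r ^ 2 - (r * v) ^ 2 = r ^ 2 * (1 - v ^ 2) := by ring
  have h5 : t - r * v = r * (t / r - v) := by field_simp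
  rw [h4, h5, abs_of_pos hr, abs_mul, abs_of_pos hr, Real.mul_rpow (by positivity) h3.le,
    Real.mul_rpow hr.le (abs_nonneg _), ← ENNReal.ofReal_mul (by positivity),
    ← ENNReal.ofReal_mul (by positivity), ← ENNReal.ofReal_mul (by positivity)]
  congr 1
  have e : r * (r ^ 2) ^ ((s - 1) / 2) * r ^ (-s) = 1 := by
    rw [← Real.rpow_natCast, ← Real.rpow_mul hr.le]
    nth_rewrite 1 [← Real.rpow_one r]
    rw [← Real.rpow_add hr, ← Real.rpow_add hr]
    push_cast
    rw [show 1 + 2 * ((s - 1) / 2) + -s = 0 by ring, Real.rpow_zero]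
  linear_combination ((1 + s) * r * (1 - v ^ 2) ^ ((s - 1) / 2) * |t / r - v| ^ (-s)) * e

/-- The weight `(1 - u²)^{(1+s)/2}` is a superposition over `r ∈ (0, 1)` of the weights
`(r² - u²)_+^{(s-1)/2}`, hence so are the potentials. -/
lemma potF_eq_lintegral {s : ℝ} (hs0 : 0 < s) (t : ℝ) :
    potF s t = ∫⁻ r in Ioo (0 : ℝ) 1, ENNReal.ofReal ((1 + s) * r) * potP s (t / r) := by
  set K : ℝ → ℝ → ℝ≥0∞ := fun u r => {q : ℝ × ℝ | |q.1| < q.2}.indicator (fun q =>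
    ENNReal.ofReal ((1 + s) * q.2 * (q.2 ^ 2 - q.1 ^ 2) ^ ((s - 1) / 2)) *
      ENNReal.ofReal (|t - q.1| ^ (-s))) (u, r) with hK
  have hmeas : Measurable (Function.uncurry K) := by
    refine Measurable.indicator (by fun_prop) ?_
    exact measurableSet_lt (by fun_prop) (by fun_prop)
  have h1 : ∀ u ∈ Ioo (-1 : ℝ) 1, ENNReal.ofReal ((1 - u ^ 2) ^ ((1 + s) / 2) * |t - u| ^ (-s)) =
      ∫⁻ r in Ioo (0 : ℝ) 1, K u r := by
    intro u hu
    have hu1 : |u| < 1 := abs_lt.2 hu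
    have h3 : (0 : ℝ) < 1 - u ^ 2 := by nlinarith [hu.1, hu.2]
    rw [ENNReal.ofReal_mul (by positivity), ← lintegral_layer hs0 hu1,
      ← lintegral_mul_const' _ _ ENNReal.ofReal_ne_top]
    have hset : Ioo |u| 1 = Ioi |u| ∩ Ioo 0 1 := by
      ext r
      constructor
      · intro hr
        exact ⟨hr.1, (abs_nonneg u).trans_lt hr.1, hr.2⟩
      · rintro ⟨h, h'⟩
        exact ⟨h, h'.2⟩
    rw [hset, ← Measure.restrict_restrict measurableSet_Ioi,
      ← lintegral_indicator measurableSet_Ioi]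
    refine lintegral_congr fun r => ?_
    simp only [hK, Set.indicator, mem_Ioi, mem_ofPred_eq]
  have h2 : ∀ r ∈ Ioo (0 : ℝ) 1, ∫⁻ u in Ioo (-1 : ℝ) 1, K u r =
      ENNReal.ofReal ((1 + s) * r) * potP s (t / r) := by
    intro r hr
    rw [← potP_scale hs0 hr.1]
    have hset : Ioo (-r) r = Ioo (-r) r ∩ Ioo (-1) 1 := by
      rw [eq_comm, Set.inter_eq_left]
      exact Ioo_subset_Ioo (by linarith [hr.2]) hr.2.le
    conv_rhs => rw [hset, ← Measure.restrict_restrict measurableSet_Ioo,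
      ← lintegral_indicator measurableSet_Ioo]
    refine lintegral_congr fun u => ?_
    simp only [hK, Set.indicator, mem_Ioo, mem_ofPred_eq, abs_lt]
  rw [potF, setLIntegral_congr_fun measurableSet_Ioo h1, lintegral_lintegral_swap
    hmeas.aemeasurable, setLIntegral_congr_fun measurableSet_Ioo h2]

lemma potF_neg {s t : ℝ} : potF s (-t) = potF s t := by
  unfold potF
  rw [← setLIntegral_neg_Ioo]
  refine lintegral_congr fun u => ?_
  rw [neg_sq, show -t - -u = -(t - u) by ring, abs_neg]

/-- The part of the layered potential coming from radii below the evaluation point. -/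
def potM (s : ℝ) (T : ℝ) : ℝ≥0∞ := ∫⁻ r in Ioo (0 : ℝ) T, ENNReal.ofReal r * potP s (1 / r)

lemma potF_eq_potM {s t : ℝ} (hs0 : 0 < s) (ht : 0 < t) :
    potF s t = ENNReal.ofReal ((1 + s) * t ^ 2) * potM s (1 / t) := by
  have himg : (fun x : ℝ => t * x) '' Ioo 0 (1 / t) = Ioo 0 1 := by
    rw [Set.image_mul_left_Ioo ht, mul_zero, mul_one_div_cancel ht.ne']
  rw [potF_eq_lintegral hs0, ← himg,
    lintegral_image_eq_lintegral_abs_deriv_mul (f' := fun _ => t) measurableSet_Ioo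
    (fun x _ => by simpa using ((hasDerivAt_id x).const_mul t).hasDerivWithinAt)
    (fun x _ y _ h => by simpa [ht.ne'] using h), potM,
    ← lintegral_const_mul' _ _ ENNReal.ofReal_ne_top]
  refine setLIntegral_congr_fun measurableSet_Ioo fun r hr => ?_
  have hr0 := hr.1
  simp only [abs_of_pos ht, ← mul_assoc]
  rw [← ENNReal.ofReal_mul ht.le, ← ENNReal.ofReal_mul (by positivity)]
  congr 2
  · ring
  · field_simp

lemma cos_half_pos {s : ℝ} (hs0 : 0 < s) (hs1 : s < 1) : 0 < Real.cos (s * π / 2) := by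
  apply Real.cos_pos_of_mem_Ioo
  constructor <;> nlinarith [Real.pi_pos]

lemma potF_one {s : ℝ} (hs0 : 0 < s) (hs1 : s < 1) :
    potF s 1 = ENNReal.ofReal ((1 + s) * ((1 - s) * (π / Real.cos (s * π / 2)) / 2)) := by
  have h := lintegral_beta_sym (p := (1 + s) / 2 + 1) (q := (1 - s) / 2 + 1)
    (by linarith) (by linarith)
  have e : BetaR ((1 + s) / 2 + 1) ((1 - s) / 2 + 1) =
      (1 + s) * (1 - s) / 8 * BetaR ((1 - s) / 2) ((1 + s) / 2) := by
    unfold BetaR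
    rw [Real.Gamma_add_one (by linarith), Real.Gamma_add_one (by linarith),
      show (1 + s) / 2 + 1 + ((1 - s) / 2 + 1) = 2 + 1 by ring, Real.Gamma_add_one two_ne_zero,
      show (1 - s) / 2 + (1 + s) / 2 = 1 by ring, Real.Gamma_one, Real.Gamma_two]
    ring
  rw [show (1 + s) / 2 + 1 + ((1 - s) / 2 + 1) - 1 = 2 by ring, e, BetaR_refl] at h
  rw [show (1 + s) * ((1 - s) * (π / Real.cos (s * π / 2)) / 2) =
    2 ^ (2 : ℝ) * ((1 + s) * (1 - s) / 8 * (π / Real.cos (s * π / 2))) by norm_num; ring, ← h]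
  refine setLIntegral_congr_fun measurableSet_Ioo fun u hu => ?_
  have h1 : 0 < 1 - u := by linarith [hu.2]
  have h2 : 0 < 1 + u := by linarith [hu.1]
  congr 1
  rw [show 1 - u ^ 2 = (1 + u) * (1 - u) by ring, Real.mul_rpow h2.le h1.le, abs_of_pos h1,
    mul_assoc, ← Real.rpow_add h1]
  congr 2 <;> ring

/-- Read off from the value of `potF` at the endpoint `t = 1`, where it is a Beta integral. -/
lemma potM_one {s : ℝ} (hs0 : 0 < s) (hs1 : s < 1) :
    potM s 1 = ENNReal.ofReal ((1 - s) * (π / Real.cos (s * π / 2)) / 2) := by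
  have h := potF_eq_potM hs0 one_pos
  rw [potF_one hs0 hs1, ENNReal.ofReal_mul (by linarith)] at h
  simp only [one_pow, mul_one, div_one] at h
  exact ((ENNReal.mul_right_inj (by simpa using by linarith) (by simp)).1 h).symm

lemma potM_split {s α β : ℝ} (hα : 0 < α) (hαβ : α ≤ β) :
    potM s β = potM s α + ∫⁻ r in Ioo α β, ENNReal.ofReal r * potP s (1 / r) := by
  unfold potM
  have hsplit : Ioo 0 β =ᵐ[volume] (Ioo 0 α ∪ Ioo α β : Set ℝ) := by
    rcases hαβ.eq_or_lt with rfl | h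
    · simp only [lt_self_iff_false, not_false_eq_true, Ioo_eq_empty, union_empty]
      exact ae_eq_refl _
    rw [← Ioc_union_Ioo_eq_Ioo hα.le h]
    exact (Ioo_ae_eq_Ioc.symm).union (ae_eq_refl _)
  rw [setLIntegral_congr hsplit, lintegral_union measurableSet_Ioo]
  rw [Set.disjoint_left]
  intro x hx hx'
  linarith [hx.2, hx'.1]

/-- Layers with `r ≥ t` contribute the constant equilibrium potential, and layers with `r < t`
sum to a multiple of `potM s 1`. -/
lemma potF_inside_pos {s t : ℝ} (hs0 : 0 < s) (hs1 : s < 1) (ht0 : 0 ≤ t) (ht : t ≤ 1) :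
    potF s t =
      ENNReal.ofReal ((1 + s) * (π / Real.cos (s * π / 2)) / 2 * (1 - s * t ^ 2)) := by
  have hc : 0 < π / Real.cos (s * π / 2) := div_pos Real.pi_pos (cos_half_pos hs0 hs1)
  set c := π / Real.cos (s * π / 2) with hcdef
  rcases ht0.eq_or_lt with rfl | ht0
  · rw [potF_eq_lintegral hs0]
    have : ∀ r ∈ Ioo (0 : ℝ) 1, ENNReal.ofReal ((1 + s) * r) * potP s (0 / r) =
        ENNReal.ofReal (1 + s) * (ENNReal.ofReal r * ENNReal.ofReal c) := by
      intro r hr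
      rw [zero_div, potP_inside hs0 hs1 (by simp), ENNReal.ofReal_mul (by linarith), mul_assoc]
    rw [setLIntegral_congr_fun measurableSet_Ioo this,
      lintegral_const_mul' _ _ ENNReal.ofReal_ne_top, lintegral_id_mul le_rfl zero_le_one hc.le,
      ← ENNReal.ofReal_mul (by linarith)]
    congr 1; ring
  · have h1 : 1 ≤ 1 / t := by rw [le_div_iff₀ ht0]; linarith
    have : ∀ r ∈ Ioo 1 (1 / t), ENNReal.ofReal r * potP s (1 / r) =
        ENNReal.ofReal r * ENNReal.ofReal c := by
      intro r hr
      have hr0 : 0 < r := by linarith [hr.1]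
      rw [potP_inside hs0 hs1]
      rw [abs_of_pos (by positivity), div_lt_one hr0]
      exact hr.1
    rw [potF_eq_potM hs0 ht0, potM_split one_pos h1, potM_one hs0 hs1,
      setLIntegral_congr_fun measurableSet_Ioo this, lintegral_id_mul zero_le_one h1 hc.le,
      ← ENNReal.ofReal_add (by have : 0 < 1 - s := by linarith
                               positivity)
        (by have : 0 ≤ (1 / t) ^ 2 - 1 ^ 2 := by nlinarith
            positivity), ← ENNReal.ofReal_mul (by positivity)]
    congr 1
    field_simp
    ring

lemma potF_le_pos {s t : ℝ} (hs0 : 0 < s) (hs1 : s < 1) (ht0 : 0 ≤ t) :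
    potF s t ≤ ENNReal.ofReal ((1 + s) * (π / Real.cos (s * π / 2)) / 2) := by
  have hc : 0 < π / Real.cos (s * π / 2) := div_pos Real.pi_pos (cos_half_pos hs0 hs1)
  set c := π / Real.cos (s * π / 2) with hcdef
  have hP : ∀ r, 0 ≤ r → potP s r ≤ ENNReal.ofReal c := by
    intro r hr
    rcases lt_or_ge r 1 with h | h
    · exact (potP_inside hs0 hs1 (by rwa [abs_of_nonneg hr])).le
    · exact potP_outside hs0 hs1 h
  rw [potF_eq_lintegral hs0]
  calc _ ≤ ∫⁻ r in Ioo (0 : ℝ) 1,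
        ENNReal.ofReal (1 + s) * (ENNReal.ofReal r * ENNReal.ofReal c) := by
        refine setLIntegral_mono' measurableSet_Ioo fun r hr => ?_
        rw [ENNReal.ofReal_mul (by linarith), mul_assoc]
        gcongr
        exact hP _ (div_nonneg ht0 hr.1.le)
    _ = _ := by
      rw [lintegral_const_mul' _ _ ENNReal.ofReal_ne_top, lintegral_id_mul le_rfl zero_le_one hc.le,
      ← ENNReal.ofReal_mul (by linarith)]
      congr 1; ring

/-- Replacing, in the layers seen from outside, `potP` by its upper bound only decreases what is
left of the fixed total `potM s 1`. -/
lemma potF_ge_pos {s t : ℝ} (hs0 : 0 < s) (hs1 : s < 1) (ht : 1 ≤ t) :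
    (1 + s) * (π / Real.cos (s * π / 2)) / 2 * (1 - s * t ^ 2) ≤ (potF s t).toReal := by
  have hc : 0 < π / Real.cos (s * π / 2) := div_pos Real.pi_pos (cos_half_pos hs0 hs1)
  have hfin : potF s t ≠ ⊤ :=
    ((potF_le_pos hs0 hs1 (by linarith)).trans_lt ENNReal.ofReal_lt_top).ne
  have ht0 : 0 < t := by linarith
  set c := π / Real.cos (s * π / 2) with hcdef
  have h1 : 1 / t ≤ 1 := by rw [div_le_one ht0]; exact ht
  have hsp := potM_split (s := s) (α := 1 / t) (β := 1) (by positivity) h1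
  have hle : ∫⁻ r in Ioo (1 / t) 1, ENNReal.ofReal r * potP s (1 / r) ≤
      ENNReal.ofReal (c * (1 ^ 2 - (1 / t) ^ 2) / 2) := by
    rw [← lintegral_id_mul (by positivity) h1 hc.le]
    refine setLIntegral_mono' measurableSet_Ioo fun r hr => ?_
    have hr0 : 0 < r := lt_trans (by positivity) hr.1
    gcongr
    apply potP_outside hs0 hs1
    rw [le_div_iff₀ hr0]; linarith [hr.2]
  have hx : 0 ≤ 1 ^ 2 - (1 / t) ^ 2 := by
    have : 0 < 1 / t := by positivity
    nlinarith
  have hM : ENNReal.ofReal ((1 - s) * c / 2) ≤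
      potM s (1 / t) + ENNReal.ofReal (c * (1 ^ 2 - (1 / t) ^ 2) / 2) := by
    rw [← potM_one hs0 hs1, hsp]
    gcongr
  rw [potF_eq_potM hs0 ht0] at hfin ⊢
  have hMfin : potM s (1 / t) ≠ ⊤ := by
    intro h
    rw [h, ENNReal.mul_top] at hfin
    · exact hfin rfl
    · simpa using by positivity
  have hM' := (ENNReal.ofReal_le_iff_le_toReal
    (ENNReal.add_ne_top.2 ⟨hMfin, ENNReal.ofReal_ne_top⟩)).1 hM
  rw [ENNReal.toReal_add hMfin (by simp), ENNReal.toReal_ofReal (by positivity)] at hM'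
  rw [ENNReal.toReal_mul, ENNReal.toReal_ofReal (by positivity)]
  calc _ = (1 + s) * t ^ 2 * ((1 - s) * c / 2 - c * (1 ^ 2 - (1 / t) ^ 2) / 2) := by
        field_simp; ring
    _ ≤ _ := by
      gcongr; linarith

/-- On `[-1, 1]` the potential of `(1 - u²)^{(1+s)/2}` is an explicit quadratic polynomial. -/
lemma potF_inside {s t : ℝ} (hs0 : 0 < s) (hs1 : s < 1) (ht : |t| ≤ 1) :
    (potF s t).toReal = (1 + s) * (π / Real.cos (s * π / 2)) / 2 * (1 - s * t ^ 2) := by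
  have hc : 0 < π / Real.cos (s * π / 2) := div_pos Real.pi_pos (cos_half_pos hs0 hs1)
  have h : potF s t = potF s |t| := by
    rcases abs_choice t with h | h <;> rw [h]
    rw [potF_neg]
  have h2 : t ^ 2 ≤ 1 := by rw [← sq_abs]; nlinarith [abs_nonneg t]
  have h3 : 0 ≤ 1 - s * t ^ 2 := by nlinarith [sq_nonneg t]
  rw [h, potF_inside_pos hs0 hs1 (abs_nonneg t) ht, ENNReal.toReal_ofReal, sq_abs]
  rw [sq_abs]; positivity

/-- Everywhere, the potential of `(1 - u²)^{(1+s)/2}` dominates that quadratic polynomial. -/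
lemma potF_ge {s t : ℝ} (hs0 : 0 < s) (hs1 : s < 1) :
    (1 + s) * (π / Real.cos (s * π / 2)) / 2 * (1 - s * t ^ 2) ≤ (potF s t).toReal := by
  rcases le_or_gt |t| 1 with h | h
  · exact (potF_inside hs0 hs1 h).ge
  · have h' : potF s t = potF s |t| := by
      rcases abs_choice t with h | h <;> rw [h]
      rw [potF_neg]
    rw [h', ← sq_abs]
    exact potF_ge_pos hs0 hs1 h.le

lemma potF_le {s t : ℝ} (hs0 : 0 < s) (hs1 : s < 1) :
    potF s t ≤ ENNReal.ofReal ((1 + s) * (π / Real.cos (s * π / 2)) / 2) := by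
  have h' : potF s t = potF s |t| := by
    rcases abs_choice t with h | h <;> rw [h]
    rw [potF_neg]
  rw [h']
  exact potF_le_pos hs0 hs1 (abs_nonneg t)

/-! ### Powers of the sine on `(0, π)` -/

lemma lintegral_sin_rpow {α : ℝ} (hα : -1 < α) :
    ∫⁻ t in Ioo 0 π, ENNReal.ofReal (Real.sin t ^ α) =
      ENNReal.ofReal (BetaR (1 / 2) ((α + 1) / 2)) := by
  have himg : Real.cos '' Ioo 0 π = Ioo (-1) 1 := by
    ext u
    constructor
    · rintro ⟨x, hx, rfl⟩
      have := Real.sin_pos_of_mem_Ioo hx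
      have h1 := Real.sin_sq_add_cos_sq x
      constructor <;> nlinarith
    · intro hu
      exact ⟨Real.arccos u, ⟨Real.arccos_pos.2 hu.2, (Real.arccos_lt_pi).2 hu.1⟩,
        Real.cos_arccos hu.1.le hu.2.le⟩
  rw [← lintegral_one_sub_sq (by linarith), ← himg,
    lintegral_image_eq_lintegral_abs_deriv_mul (f' := fun t => -Real.sin t) measurableSet_Ioo
    (fun x _ => (Real.hasDerivAt_cos x).hasDerivWithinAt)
    (Real.injOn_cos.mono Ioo_subset_Icc_self)]
  refine setLIntegral_congr_fun measurableSet_Ioo fun t ht => ?_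
  have hs := Real.sin_pos_of_mem_Ioo ht
  rw [← Real.sin_sq, abs_neg, abs_of_pos hs, ← ENNReal.ofReal_mul hs.le, ← Real.rpow_natCast,
    ← Real.rpow_mul hs.le]
  congr 1
  nth_rewrite 2 [← Real.rpow_one (Real.sin t)]
  rw [← Real.rpow_add hs]
  congr 1
  push_cast; ring

lemma BetaR_pos {x y : ℝ} (hx : 0 < x) (hy : 0 < y) : 0 < BetaR x y :=
  ProbabilityTheory.beta_pos hx hy

lemma integrableOn_sin_rpow {α : ℝ} (hα : -1 < α) :
    IntegrableOn (fun t => Real.sin t ^ α) (Ioo 0 π) := by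
  refine ⟨(Real.measurable_sin.pow_const α).aestronglyMeasurable, ?_⟩
  rw [hasFiniteIntegral_iff_ofReal]
  · rw [lintegral_sin_rpow hα]; exact ENNReal.ofReal_lt_top
  · exact ae_restrict_of_forall_mem measurableSet_Ioo fun t ht =>
      Real.rpow_nonneg (Real.sin_pos_of_mem_Ioo ht).le _

lemma intervalIntegrable_sin_rpow {α : ℝ} (hα : -1 < α) :
    IntervalIntegrable (fun t => Real.sin t ^ α) volume 0 π := by
  rw [intervalIntegrable_iff_integrableOn_Ioo_of_le Real.pi_pos.le]
  exact integrableOn_sin_rpow hα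

lemma integral_sin_rpow {α : ℝ} (hα : -1 < α) :
    ∫ t in (0 : ℝ)..π, Real.sin t ^ α = BetaR (1 / 2) ((α + 1) / 2) := by
  rw [intervalIntegral.integral_of_le Real.pi_pos.le, integral_Ioc_eq_integral_Ioo,
    integral_eq_lintegral_of_nonneg_ae, lintegral_sin_rpow hα,
    ENNReal.toReal_ofReal (BetaR_pos (by norm_num) (by linarith)).le]
  · exact ae_restrict_of_forall_mem measurableSet_Ioo fun t ht =>
      Real.rpow_nonneg (Real.sin_pos_of_mem_Ioo ht).le _
  · exact (Real.measurable_sin.pow_const α).aestronglyMeasurable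

/-- A `π`-periodic Lipschitz function varies at most like `sin t` between `ψ` and `ψ + t`. -/
lemma norm_sub_le_sin {E : Type*} [NormedAddCommGroup E] {f : ℝ → E} {L : ℝ} (hL : 0 ≤ L)
    (hper : ∀ x, f (x + π) = f x) (hlip : ∀ x y, ‖f x - f y‖ ≤ L * |x - y|) (ψ : ℝ) {t : ℝ}
    (ht : t ∈ Icc 0 π) : ‖f (ψ + t) - f ψ‖ ≤ L * (π / 2) * Real.sin t := by
  have key : ∀ u, 0 ≤ u → u ≤ π / 2 → u ≤ π / 2 * Real.sin u := by
    intro u h0 h1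
    have := Real.mul_le_sin h0 h1
    have hp := Real.pi_pos
    calc u = π / 2 * (2 / π * u) := by field_simp
      _ ≤ _ := by gcongr
  rcases le_total t (π / 2) with h | h
  · have h1 := hlip (ψ + t) ψ
    rw [add_sub_cancel_left, abs_of_nonneg ht.1] at h1
    have := mul_le_mul_of_nonneg_left (key t ht.1 h) hL
    linarith
  · have h1 := hlip (ψ + t) (ψ + π)
    rw [hper, add_sub_add_left_eq_sub, abs_sub_comm, abs_of_nonneg (by linarith [ht.2])] at h1
    have h2 := key (π - t) (by linarith [ht.2]) (by linarith)
    rw [Real.sin_pi_sub] at h2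
    have := mul_le_mul_of_nonneg_left h2 hL
    linarith

/-! ### Fourier multipliers of the two singular kernels -/

/-- The exponential `t ↦ exp (2 i n t)`, a basic `π`-periodic function. -/
def ee (n : ℤ) (t : ℝ) : ℂ := Complex.exp (2 * n * t * Complex.I)

lemma ee_zero (t : ℝ) : ee 0 t = 1 := by simp [ee]

lemma ee_add (n : ℤ) (x y : ℝ) : ee n (x + y) = ee n x * ee n y := by
  unfold ee; rw [← Complex.exp_add]; congr 1; push_cast; ring

lemma ee_neg_mul (n : ℤ) (x : ℝ) : ee n x * ee (-n) x = 1 := by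
  unfold ee; rw [← Complex.exp_add, ← Complex.exp_zero]; congr 1; push_cast; ring

lemma ee_pi (n : ℤ) : ee n π = 1 := by
  unfold ee
  rw [show (2 * n * π * Complex.I : ℂ) = n * (2 * π * Complex.I) by ring]
  exact Complex.exp_int_mul_two_pi_mul_I n

lemma norm_ee (n : ℤ) (t : ℝ) : ‖ee n t‖ = 1 := by
  unfold ee
  rw [show (2 * n * t * Complex.I : ℂ) = ((2 * n * t : ℝ) : ℂ) * Complex.I by push_cast; ring]
  exact Complex.norm_exp_ofReal_mul_I _

lemma hasDerivAt_ee (n : ℤ) (t : ℝ) : HasDerivAt (ee n) (2 * n * Complex.I * ee n t) t := by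
  have h1 : HasDerivAt (fun t : ℝ => (2 * n * t * Complex.I : ℂ)) (2 * n * Complex.I) t := by
    have h := (((Complex.ofRealCLM.hasDerivAt (x := t)).const_mul (2 * n : ℂ))).mul_const Complex.I
    simpa using h
  exact h1.cexp.congr_deriv (mul_comm _ _)

@[fun_prop]
lemma continuous_ee (n : ℤ) : Continuous (ee n) := by unfold ee; fun_prop

lemma ee_lipschitz (n : ℤ) (x y : ℝ) : ‖ee n x - ee n y‖ ≤ (2 * |(n : ℝ)|) * |x - y| := by
  have := Convex.norm_image_sub_le_of_norm_hasDerivWithin_le (f := ee n)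
    (f' := fun t => 2 * n * Complex.I * ee n t) (s := univ) (C := 2 * |(n : ℝ)|)
    (fun x _ => (hasDerivAt_ee n x).hasDerivWithinAt)
    (fun x _ => by simp [norm_ee]) convex_univ (mem_univ y) (mem_univ x)
  simpa using this

lemma ee_sub_one_le (n : ℤ) {t : ℝ} (ht : t ∈ Icc 0 π) :
    ‖ee n t - 1‖ ≤ 2 * |(n : ℝ)| * (π / 2) * Real.sin t := by
  have := norm_sub_le_sin (f := ee n) (L := 2 * |(n : ℝ)|) (by positivity)
    (fun x => by rw [ee_add, ee_pi, mul_one]) (ee_lipschitz n) 0 ht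
  simpa [ee] using this

/-- Multiplier of the kernel `|sin|^{-s}`. -/
def lamC (s : ℝ) (n : ℤ) : ℂ := ∫ t in (0 : ℝ)..π, ((Real.sin t ^ (-s) : ℝ) : ℂ) * ee n t

/-- Multiplier of the regularised kernel `|sin|^{s-2}`. -/
def regC (s : ℝ) (n : ℤ) : ℂ := ∫ t in (0 : ℝ)..π, ((Real.sin t ^ (s - 2) : ℝ) : ℂ) * (ee n t - 1)

lemma hasDerivAt_sin_rpow_mul (β : ℝ) (n : ℤ) {t : ℝ} (ht : t ∈ Ioo 0 π) :
    HasDerivAt (fun t => ((Real.sin t ^ β : ℝ) : ℂ) * (ee n t * Complex.exp (t * Complex.I)))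
      (((Real.sin t ^ (β - 1) : ℝ) : ℂ) *
        (((β + 2 * n + 1) * ee (n + 1) t + (β - 2 * n - 1) * ee n t) / 2)) t := by
  have hs := Real.sin_pos_of_mem_Ioo ht
  have h1 := ((Real.hasDerivAt_sin t).rpow_const (p := β) (Or.inl hs.ne')).ofReal_comp
  have h2 : HasDerivAt (fun t : ℝ => Complex.exp (t * Complex.I))
      (Complex.exp (t * Complex.I) * Complex.I) t := by
    have h := ((Complex.ofRealCLM.hasDerivAt (x := t)).mul_const Complex.I).cexp
    simpa using h
  refine (h1.mul ((hasDerivAt_ee n t).mul h2)).congr_deriv ?_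
  have e1 : Real.sin t ^ β = Real.sin t ^ (β - 1) * Real.sin t := by
    rw [← Real.rpow_add_one hs.ne']; congr 1; ring
  have e2 : ee (n + 1) t = ee n t * (Complex.exp (t * Complex.I)) ^ 2 := by
    unfold ee; rw [← Complex.exp_nat_mul, ← Complex.exp_add]; congr 1; push_cast; ring
  have e3 : Complex.exp (t * Complex.I) = Complex.cos t + Complex.sin t * Complex.I :=
    Complex.exp_mul_I _
  have e4 := Complex.sin_sq_add_cos_sq t
  simp only [Pi.mul_apply]
  rw [e1, e2, e3]
  push_cast
  have e5 := Complex.I_sq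
  generalize Complex.cos (t : ℂ) = c at *
  generalize Complex.sin (t : ℂ) = S at *
  generalize ((Real.sin t ^ (β - 1) : ℝ) : ℂ) = w at *
  generalize ee n t = E at *
  have e6 : (c + S * Complex.I) * (c - S * Complex.I) = 1 := by
    linear_combination e4 - S ^ 2 * e5
  linear_combination (w * E * (β - 2 * n - 1) / 2) * e6

lemma intervalIntegrable_of_le_sin {𝕜 : Type*} [RCLike 𝕜] {f : ℝ → 𝕜} (hm : Measurable f) {C α : ℝ} (hα : -1 < α)
    (h : ∀ t ∈ Ioo 0 π, ‖f t‖ ≤ C * Real.sin t ^ α) : IntervalIntegrable f volume 0 π := by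
  rw [intervalIntegrable_iff_integrableOn_Ioo_of_le Real.pi_pos.le]
  exact Integrable.mono' ((integrableOn_sin_rpow hα).const_mul C) hm.aestronglyMeasurable
    (ae_restrict_of_forall_mem measurableSet_Ioo h)

lemma measurable_sin_rpow (α : ℝ) : Measurable fun t : ℝ => ((Real.sin t ^ α : ℝ) : ℂ) :=
  Complex.measurable_ofReal.comp (Real.measurable_sin.pow_const α)

lemma norm_sin_rpow (α : ℝ) {t : ℝ} (ht : t ∈ Ioo 0 π) :
    ‖((Real.sin t ^ α : ℝ) : ℂ)‖ = Real.sin t ^ α := by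
  rw [Complex.norm_real, Real.norm_of_nonneg (Real.rpow_nonneg (Real.sin_pos_of_mem_Ioo ht).le _)]

lemma intervalIntegrable_lam {s : ℝ} (hs1 : s < 1) (n : ℤ) :
    IntervalIntegrable (fun t => ((Real.sin t ^ (-s) : ℝ) : ℂ) * ee n t) volume 0 π := by
  refine intervalIntegrable_of_le_sin (C := 1) (α := -s)
    ((measurable_sin_rpow _).mul (continuous_ee n).measurable) (by linarith) fun t ht => ?_
  rw [norm_mul, norm_sin_rpow _ ht, norm_ee]; linarith

lemma sin_rpow_sub_two_mul {s t : ℝ} (ht : t ∈ Ioo 0 π) :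
    Real.sin t ^ (s - 2) * Real.sin t = Real.sin t ^ (s - 1) := by
  rw [← Real.rpow_add_one (Real.sin_pos_of_mem_Ioo ht).ne']; congr 1; ring

lemma intervalIntegrable_reg {s : ℝ} (hs0 : 0 < s) (n : ℤ) :
    IntervalIntegrable (fun t => ((Real.sin t ^ (s - 2) : ℝ) : ℂ) * (ee n t - 1)) volume 0 π := by
  refine intervalIntegrable_of_le_sin (C := 2 * |(n : ℝ)| * (π / 2)) (α := s - 1)
    ((measurable_sin_rpow _).mul ((continuous_ee n).measurable.sub_const 1)) (by linarith)
    fun t ht => ?_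
  rw [norm_mul, norm_sin_rpow _ ht, ← sin_rpow_sub_two_mul ht]
  have := ee_sub_one_le n (Ioo_subset_Icc_self ht)
  have h0 := Real.rpow_nonneg (Real.sin_pos_of_mem_Ioo ht).le (s - 2)
  nlinarith [mul_le_mul_of_nonneg_left this h0]

/-- Recursion from integrating the derivative of `sin t ^ (1 - s) * exp (i (2 n + 1) t)`. -/
lemma lamC_succ {s : ℝ} (hs1 : s < 1) (n : ℤ) :
    (2 * n + s) * lamC s n = (2 * n + 2 - s) * lamC s (n + 1) := by
  have hF := intervalIntegral.integral_eq_sub_of_hasDerivAt_of_le Real.pi_pos.le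
    (f := fun t => ((Real.sin t ^ (1 - s) : ℝ) : ℂ) * (ee n t * Complex.exp (t * Complex.I)))
    (f' := fun t => (2 * n + 2 - s) / 2 * (((Real.sin t ^ (-s) : ℝ) : ℂ) * ee (n + 1) t) -
      (2 * n + s) / 2 * (((Real.sin t ^ (-s) : ℝ) : ℂ) * ee n t))
    (by
      refine Continuous.continuousOn (Continuous.mul (Complex.continuous_ofReal.comp ?_) (by fun_prop))
      exact Real.continuous_sin.rpow_const fun _ => Or.inr (by linarith))
    (fun t ht => (hasDerivAt_sin_rpow_mul (1 - s) n ht).congr_deriv (by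
      rw [show 1 - s - 1 = -s by ring]; push_cast; ring))
    (((intervalIntegrable_lam hs1 _).const_mul _).sub ((intervalIntegrable_lam hs1 _).const_mul _))
  rw [intervalIntegral.integral_sub ((intervalIntegrable_lam hs1 _).const_mul _)
    ((intervalIntegrable_lam hs1 _).const_mul _), intervalIntegral.integral_const_mul,
    intervalIntegral.integral_const_mul] at hF
  simp only [Real.sin_pi, Real.sin_zero, Real.zero_rpow (show 1 - s ≠ 0 by linarith),
    Complex.ofReal_zero, zero_mul, sub_zero] at hF
  change _ / 2 * lamC s (n + 1) - _ / 2 * lamC s n = 0 at hF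
  linear_combination (-2) * hF

/-- Recursion from integrating the derivative of `sin t ^ (s - 1) * (exp (i (2 n + 1) t) - cos t)`;
subtracting `cos t` makes the boundary terms vanish. -/
lemma regC_succ {s : ℝ} (hs0 : 0 < s) (hs1 : s < 1) (n : ℤ) :
    (2 * n + s) * regC s (n + 1) = (2 * n + 2 - s) * regC s n -
      2 * s * (BetaR (1 / 2) ((s + 1) / 2) : ℝ) := by
  have hS : IntervalIntegrable (fun t => ((Real.sin t ^ s : ℝ) : ℂ)) volume 0 π := by
    refine intervalIntegrable_of_le_sin (C := 1) (α := s) (measurable_sin_rpow _) (by linarith)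
      fun t ht => ?_
    rw [norm_sin_rpow _ ht, one_mul]
  set F : ℝ → ℂ := fun t => ((Real.sin t ^ (s - 1) : ℝ) : ℂ) *
    (ee n t * Complex.exp (t * Complex.I) - Real.cos t) with hFdef
  have hder : ∀ t ∈ Ioo 0 π, HasDerivAt F
      ((2 * n + s) / 2 * (((Real.sin t ^ (s - 2) : ℝ) : ℂ) * (ee (n + 1) t - 1)) -
      (2 * n + 2 - s) / 2 * (((Real.sin t ^ (s - 2) : ℝ) : ℂ) * (ee n t - 1)) +
      s * ((Real.sin t ^ s : ℝ) : ℂ)) t := by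
    intro t ht
    have hs := Real.sin_pos_of_mem_Ioo ht
    have h1 := hasDerivAt_sin_rpow_mul (s - 1) n ht
    have h2 := ((((Real.hasDerivAt_sin t).rpow_const (p := s - 1) (Or.inl hs.ne')).mul
      (Real.hasDerivAt_cos t))).ofReal_comp
    have h3 := h1.sub h2
    have : F = ((fun t => ((Real.sin t ^ (s - 1) : ℝ) : ℂ) * (ee n t * Complex.exp (t * Complex.I))) -
        fun t => ((((fun t => Real.sin t ^ (s - 1)) * Real.cos) t : ℝ) : ℂ)) := by
      funext t; simp only [hFdef, Pi.sub_apply, Pi.mul_apply]; push_cast; ring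
    rw [this]
    refine h3.congr_deriv ?_
    have e1 : Real.sin t ^ s = Real.sin t ^ (s - 2) * Real.sin t ^ 2 := by
      rw [← Real.rpow_natCast, ← Real.rpow_add hs]; congr 1; push_cast; ring
    have e2 : Real.sin t ^ (s - 1) = Real.sin t ^ (s - 2) * Real.sin t :=
      (sin_rpow_sub_two_mul ht).symm
    have e4 := Complex.sin_sq_add_cos_sq t
    rw [show s - 1 - 1 = s - 2 by ring, e1, e2]
    push_cast
    linear_combination (-((Real.sin t ^ (s - 2) : ℝ) : ℂ) * (s - 1)) * e4
  have hb : ∀ t ∈ Icc 0 π, ‖F t‖ ≤ (2 * |(n : ℝ)| * (π / 2) + 1) * Real.sin t ^ s := by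
    intro t ht
    have h1 : ee n t * Complex.exp (t * Complex.I) - Real.cos t =
        (ee n t - 1) * Complex.exp (t * Complex.I) + Real.sin t * Complex.I := by
      rw [Complex.exp_mul_I]; push_cast; ring
    have hs0' : 0 ≤ Real.sin t := Real.sin_nonneg_of_mem_Icc ht
    have h2 : ‖ee n t * Complex.exp (t * Complex.I) - Real.cos t‖ ≤
        (2 * |(n : ℝ)| * (π / 2) + 1) * Real.sin t := by
      rw [h1]
      refine (norm_add_le _ _).trans ?_
      rw [norm_mul, norm_mul, Complex.norm_exp_ofReal_mul_I, Complex.norm_I, Complex.norm_real,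
        Real.norm_of_nonneg hs0']
      linarith [ee_sub_one_le n ht]
    rcases hs0'.eq_or_lt with h | h
    · simp only [hFdef, ← h, Real.zero_rpow (show s - 1 ≠ 0 by linarith)]
      simp [Real.zero_rpow hs0.ne']
    · rw [hFdef]
      simp only [norm_mul, Complex.norm_real]
      rw [Real.norm_of_nonneg (by positivity)]
      have e : Real.sin t ^ s = Real.sin t ^ (s - 1) * Real.sin t := by
        rw [← Real.rpow_add_one h.ne']; congr 1; ring
      rw [e]
      have := mul_le_mul_of_nonneg_left h2 (Real.rpow_nonneg hs0' (s - 1))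
      linarith
  have hend : ∀ t ∈ Icc 0 π, Real.sin t = 0 → F t = 0 ∧ ContinuousWithinAt F (Icc 0 π) t := by
    intro t ht h
    have h0 : F t = 0 := by
      have := hb t ht
      rw [h, Real.zero_rpow hs0.ne', mul_zero] at this
      exact norm_le_zero_iff.1 this
    refine ⟨h0, ?_⟩
    rw [ContinuousWithinAt, h0]
    have hlim : Tendsto (fun t => (2 * |(n : ℝ)| * (π / 2) + 1) * Real.sin t ^ s) (𝓝[Icc 0 π] t)
        (𝓝 0) := by
      have hc : Continuous (fun t => (2 * |(n : ℝ)| * (π / 2) + 1) * Real.sin t ^ s) :=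
        continuous_const.mul (Real.continuous_sin.rpow_const fun _ => Or.inr hs0.le)
      have := hc.continuousWithinAt (s := Icc 0 π) (x := t)
      rw [ContinuousWithinAt, h, Real.zero_rpow hs0.ne', mul_zero] at this
      exact this
    exact squeeze_zero_norm' (eventually_mem_nhdsWithin.mono hb) hlim
  have h0 := hend 0 ⟨le_rfl, Real.pi_pos.le⟩ Real.sin_zero
  have hpi := hend π ⟨Real.pi_pos.le, le_rfl⟩ Real.sin_pi
  have hcont : ContinuousOn F (Icc 0 π) := by
    intro t ht
    rcases ht.1.eq_or_lt with rfl | h1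
    · exact h0.2
    rcases ht.2.eq_or_lt with rfl | h2
    · exact hpi.2
    exact (hder t ⟨h1, h2⟩).continuousAt.continuousWithinAt
  have i1 := (intervalIntegrable_reg hs0 (n + 1)).const_mul ((2 * n + s) / 2 : ℂ)
  have i2 := (intervalIntegrable_reg hs0 n).const_mul ((2 * n + 2 - s) / 2 : ℂ)
  have i3 := hS.const_mul (s : ℂ)
  have hF := intervalIntegral.integral_eq_sub_of_hasDerivAt_of_le Real.pi_pos.le hcont hder
    ((i1.sub i2).add i3)
  rw [intervalIntegral.integral_add (i1.sub i2) i3, intervalIntegral.integral_sub i1 i2,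
    intervalIntegral.integral_const_mul, intervalIntegral.integral_const_mul,
    intervalIntegral.integral_const_mul, h0.1, hpi.1, intervalIntegral.integral_ofReal,
    integral_sin_rpow (by linarith)] at hF
  change _ / 2 * regC s (n + 1) - _ / 2 * regC s n + _ = _ at hF
  linear_combination 2 * hF

/-- Multiplier of the transform `Ω ↦ Ω̃` (shifted by `π / 2`). -/
def mulC (s : ℝ) (n : ℤ) : ℂ := 2 * tauC (2 - s) * regC s n + cC s

/-- The regularised kernel has the same recursion as the analytic continuation of `|sin|^{-s}`
to the exponent `s - 2`, because the constant `c_s` is the finite part of its integral. -/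
lemma cC_rel {s : ℝ} (hs0 : 0 < s) (hs1 : s < 1) :
    cC s * (2 * s - 2) = 4 * tauC (2 - s) * s * BetaR (1 / 2) ((s + 1) / 2) := by
  have hc : Real.cos ((2 - s) * π / 2) = -Real.cos (s * π / 2) := by
    rw [show (2 - s) * π / 2 = π - s * π / 2 by ring, Real.cos_pi_sub]
  have g1 := Real.Gamma_mul_Gamma_add_half (1 - s / 2)
  have g2 := Real.Gamma_mul_Gamma_one_sub ((1 - s) / 2)
  rw [show 1 - (1 - s) / 2 = (s + 1) / 2 by ring,
    show π * ((1 - s) / 2) = π / 2 - s * π / 2 by ring, Real.sin_pi_div_two_sub] at g2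
  have g3 : Real.Gamma (s / 2 + 1) = s / 2 * Real.Gamma (s / 2) := Real.Gamma_add_one (by linarith)
  have g4 : Real.Gamma (1 - s / 2 + 1 / 2) = (1 - s) / 2 * Real.Gamma ((1 - s) / 2) := by
    rw [← Real.Gamma_add_one (by linarith)]; congr 1; ring
  have hcos := cos_half_pos hs0 hs1
  have p1 := Real.Gamma_pos_of_pos (show 0 < s / 2 by linarith)
  have hpi := Real.pi_pos
  have e1 : (2 * π) ^ (-(2 - s)) = 2 ^ (s - 1) / 2 * (π ^ (s - 1) / π) := by
    rw [Real.mul_rpow two_pos.le Real.pi_pos.le, show -(2 - s) = s - 1 - 1 by ring,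
      Real.rpow_sub_one two_ne_zero, Real.rpow_sub_one Real.pi_pos.ne']
  rw [g4, show 2 * (1 - s / 2) = 2 - s by ring, show 1 - (2 - s) = s - 1 by ring] at g1
  rw [eq_div_iff hcos.ne'] at g2
  unfold cC tauC BetaR
  rw [hc, e1, show (2 - s) / 2 = 1 - s / 2 by ring,
    show 1 / 2 + (s + 1) / 2 = s / 2 + 1 by ring, g3, Real.Gamma_one_half_eq]
  generalize Real.Gamma (1 - s / 2) = G1 at *
  field_simp
  generalize Real.Gamma ((1 - s) / 2) = H1 at *
  generalize Real.Gamma ((s + 1) / 2) = H2 at *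
  generalize Real.Gamma (2 - s) = G at *
  generalize Real.cos (s * π / 2) = c at *
  linear_combination (-4 * c * H2) * g1 - 2 * (s - 1) * G1 * g2

lemma lam_mul_zero {s : ℝ} (hs0 : 0 < s) (hs1 : s < 1) :
    2 * tauC s * lamC s 0 * mulC s 0 = 1 := by
  have h1 : lamC s 0 = (BetaR (1 / 2) ((-s + 1) / 2) : ℝ) := by
    unfold lamC
    simp only [ee_zero, mul_one]
    rw [intervalIntegral.integral_ofReal, integral_sin_rpow (by linarith)]
  have h2 : mulC s 0 = cC s := by
    unfold mulC regC
    simp [ee_zero]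
  rw [h1, h2]
  norm_cast
  have g1 := Real.Gamma_mul_Gamma_add_half (s / 2)
  have g2 := Real.Gamma_mul_Gamma_one_sub ((1 - s) / 2)
  rw [show 1 - (1 - s) / 2 = s / 2 + 1 / 2 by ring,
    show π * ((1 - s) / 2) = π / 2 - s * π / 2 by ring, Real.sin_pi_div_two_sub] at g2
  rw [show 2 * (s / 2) = s by ring] at g1
  have hcos := cos_half_pos hs0 hs1
  have p1 := Real.Gamma_pos_of_pos (show 0 < s / 2 by linarith)
  have p2 := Real.Gamma_pos_of_pos (show 0 < 1 - s / 2 by linarith)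
  have hpi := Real.pi_pos
  have e1 : (2 * π) ^ (-s) * π ^ (s - 1) = 2 ^ (1 - s) / (2 * π) := by
    rw [Real.mul_rpow two_pos.le Real.pi_pos.le, mul_assoc, ← Real.rpow_add hpi,
      show -s + (s - 1) = -1 by ring, Real.rpow_neg_one, show 1 - s = -s + 1 by ring,
      Real.rpow_add_one two_ne_zero]
    field_simp
  rw [eq_div_iff hcos.ne'] at g2
  unfold cC tauC BetaR
  rw [show (2 - s) / 2 = 1 - s / 2 by ring, show (-s + 1) / 2 = (1 - s) / 2 by ring,
    show 1 / 2 + (1 - s) / 2 = 1 - s / 2 by ring, Real.Gamma_one_half_eq]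
  generalize Real.Gamma (1 - s / 2) = G1 at *
  calc _ = 2 * ((2 * π) ^ (-s) * π ^ (s - 1)) * (Real.Gamma s * √π) * Real.cos (s * π / 2) *
        Real.Gamma ((1 - s) / 2) / Real.Gamma (s / 2) := by field_simp
    _ = 1 := by
      rw [e1]
      field_simp
      linear_combination (-Real.cos (s * π / 2) * Real.Gamma ((1 - s) / 2)) * g1 +
        Real.Gamma (s / 2) * g2

/-- The two multipliers are inverse to each other: their product does not depend on `n` by the
recursions, and it is a Gamma function identity for `n = 0`. -/
lemma lam_mul {s : ℝ} (hs0 : 0 < s) (hs1 : s < 1) (n : ℤ) :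
    2 * tauC s * lamC s n * mulC s n = 1 := by
  have hne : ∀ n : ℤ, (2 * n + s : ℂ) ≠ 0 ∧ (2 * n + 2 - s : ℂ) ≠ 0 := by
    intro n
    constructor
    · intro h
      have h' : (2 * n + s : ℝ) = 0 := by exact_mod_cast h
      have h1 : (-1 : ℝ) < 2 * n := by linarith
      have h2 : (2 * n : ℝ) < 0 := by linarith
      have : (-1 : ℤ) < 2 * n := by exact_mod_cast h1
      have : 2 * n < (0 : ℤ) := by exact_mod_cast h2
      omega
    · intro h
      have h' : (2 * n + 2 - s : ℝ) = 0 := by exact_mod_cast h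
      have h1 : (2 * n + 2 : ℝ) < 1 := by linarith
      have h2 : (0 : ℝ) < 2 * n + 2 := by linarith
      have : 2 * n + 2 < (1 : ℤ) := by exact_mod_cast h1
      have : (0 : ℤ) < 2 * n + 2 := by exact_mod_cast h2
      omega
  have hM : ∀ n : ℤ, (2 * n + s) * mulC s (n + 1) = (2 * n + 2 - s) * mulC s n := by
    intro n
    have h1 := regC_succ hs0 hs1 n
    have h2 : (cC s * (2 * s - 2) : ℂ) = 4 * tauC (2 - s) * s * (BetaR (1 / 2) ((s + 1) / 2) : ℝ) := by
      exact_mod_cast cC_rel hs0 hs1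
    unfold mulC
    linear_combination 2 * tauC (2 - s) * h1 + h2
  have hstep : ∀ n : ℤ, lamC s (n + 1) * mulC s (n + 1) = lamC s n * mulC s n := by
    intro n
    refine mul_left_cancel₀ (hne n).1 (mul_left_cancel₀ (hne n).2 ?_)
    linear_combination (2 * n + s) * mulC s (n + 1) * (-lamC_succ hs1 n) +
      (2 * n + s) * lamC s n * hM n
  have hall : ∀ n : ℤ, lamC s n * mulC s n = lamC s 0 * mulC s 0 := by
    intro n
    induction n using Int.induction_on with
    | zero => rfl
    | succ k ih => rw [hstep, ih]
    | pred k ih => rw [← ih, ← hstep, sub_add_cancel]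
  rw [mul_assoc, hall, ← mul_assoc, lam_mul_zero hs0 hs1]

/-! ### Convolution on the circle and the inversion formula -/

lemma ii_eq {E : Type*} [NormedAddCommGroup E] [NormedSpace ℝ E] (f : ℝ → E) :
    ∫ t in (0 : ℝ)..π, f t = ∫ t in Ioo 0 π, f t := by
  rw [intervalIntegral.integral_of_le Real.pi_pos.le, integral_Ioc_eq_integral_Ioo]

/-- Convolution of a `π`-periodic function with the kernel `w`, with the regularising term
`δ * F ψ` subtracted (`δ = 0` or `1` in the applications). -/
def cv (w : ℝ → ℝ) (δ : ℂ) (F : ℝ → ℂ) (ψ : ℝ) : ℂ :=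
  ∫ t in (0 : ℝ)..π, (w t : ℂ) * (F (ψ + t) - δ * F ψ)

/-- The (unnormalised) Fourier coefficients of a `π`-periodic function. -/
def fc (F : ℝ → ℂ) (n : ℤ) : ℂ := ∫ ψ in (0 : ℝ)..π, ee (-n) ψ * F ψ

lemma cv_continuous {w : ℝ → ℝ} {δ : ℂ} {F : ℝ → ℂ} {g : ℝ → ℝ} (hw : Measurable w)
    (hF : Continuous F) (hg : IntegrableOn g (Ioo 0 π))
    (hb : ∀ ψ, ∀ t ∈ Ioo 0 π, ‖(w t : ℂ) * (F (ψ + t) - δ * F ψ)‖ ≤ g t) :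
    Continuous (cv w δ F) := by
  unfold cv
  simp only [ii_eq]
  refine continuous_of_dominated (bound := g) (fun ψ => ?_) (fun ψ => ?_) hg ?_
  · exact (Measurable.mul (by fun_prop) (by fun_prop)).aestronglyMeasurable
  · exact ae_restrict_of_forall_mem measurableSet_Ioo (hb ψ)
  · exact Eventually.of_forall fun t => by fun_prop

lemma cv_periodic {w : ℝ → ℝ} {δ : ℂ} {F : ℝ → ℂ} (hF : ∀ x, F (x + π) = F x) (x : ℝ) :
    cv w δ F (x + π) = cv w δ F x := by
  unfold cv
  congr 1; funext t
  rw [hF, add_right_comm, hF]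

/-- Convolutions act on Fourier coefficients by multiplication. -/
lemma fc_cv {w : ℝ → ℝ} {δ : ℂ} {F : ℝ → ℂ} {g : ℝ → ℝ} (hw : Measurable w)
    (hF : Continuous F) (hper : ∀ x, F (x + π) = F x) (hg : IntegrableOn g (Ioo 0 π))
    (hb : ∀ ψ, ∀ t ∈ Ioo 0 π, ‖(w t : ℂ) * (F (ψ + t) - δ * F ψ)‖ ≤ g t) (n : ℤ) :
    fc (cv w δ F) n = (∫ t in (0 : ℝ)..π, (w t : ℂ) * (ee n t - δ)) * fc F n := by
  have hee : ∀ x, ee (-n) (x + π) = ee (-n) x := fun x => by rw [ee_add, ee_pi, mul_one]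
  have h1 : fc (cv w δ F) n = ∫ ψ in Ioo 0 π, ∫ t in Ioo 0 π,
      ee (-n) ψ * ((w t : ℂ) * (F (ψ + t) - δ * F ψ)) := by
    unfold fc cv
    rw [ii_eq]
    congr 1; funext ψ
    rw [ii_eq, integral_const_mul]
  have hInteg : Integrable (Function.uncurry fun ψ t =>
      ee (-n) ψ * ((w t : ℂ) * (F (ψ + t) - δ * F ψ)))
      ((volume.restrict (Ioo 0 π)).prod (volume.restrict (Ioo 0 π))) := by
    refine Integrable.mono' (Integrable.comp_snd hg (volume.restrict (Ioo 0 π))) ?_ ?_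
    · have : Measurable (Function.uncurry fun ψ t =>
        ee (-n) ψ * ((w t : ℂ) * (F (ψ + t) - δ * F ψ))) := by
        have m1 := (continuous_ee (-n)).measurable
        have m2 := hF.measurable
        fun_prop
      exact this.aestronglyMeasurable
    · rw [Measure.prod_restrict]
      refine ae_restrict_of_forall_mem (measurableSet_Ioo.prod measurableSet_Ioo) fun q hq => ?_
      simp only [Function.uncurry]
      rw [norm_mul, norm_ee, one_mul]
      exact hb q.1 q.2 hq.2
  rw [h1, integral_integral_swap hInteg, ii_eq, ← integral_mul_const]
  congr 1; funext t
  have i1 : ∀ a, IntervalIntegrable (fun ψ => ee (-n) ψ * F (ψ + a)) volume 0 π := fun a =>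
    Continuous.intervalIntegrable (by fun_prop) _ _
  have h2 : ∫ ψ in (0 : ℝ)..π, ee (-n) ψ * F (ψ + t) = ee n t * fc F n := by
    have e : ∀ ψ, ee (-n) ψ * F (ψ + t) = ee n t * (fun x => ee (-n) x * F x) (ψ + t) := by
      intro ψ
      simp only [ee_add]
      linear_combination (-ee (-n) ψ * F (ψ + t)) * ee_neg_mul n t
    simp only [e]
    rw [intervalIntegral.integral_const_mul,
      intervalIntegral.integral_comp_add_right (fun x => ee (-n) x * F x)]
    have hp : Function.Periodic (fun x => ee (-n) x * F x) π := fun x => by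
      simp only [hee, hper]
    have := hp.intervalIntegral_add_eq t 0
    rw [zero_add, add_comm t π] at this
    rw [zero_add, this, fc]
  rw [← ii_eq]
  have e : ∀ ψ, ee (-n) ψ * ((w t : ℂ) * (F (ψ + t) - δ * F ψ)) =
      (w t : ℂ) * (ee (-n) ψ * F (ψ + t)) - (w t : ℂ) * δ * (ee (-n) ψ * F ψ) := fun ψ => by ring
  simp only [e]
  have i0 := i1 0
  simp only [add_zero] at i0
  rw [intervalIntegral.integral_sub ((i1 t).const_mul _) (i0.const_mul _),
    intervalIntegral.integral_const_mul, intervalIntegral.integral_const_mul, h2, fc]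
  ring

lemma fc_injective {F : ℝ → ℂ} (hF : Continuous F) (hper : ∀ x, F (x + π) = F x)
    (h : ∀ n, fc F n = 0) : F = 0 := by
  have : Fact (0 < π) := ⟨Real.pi_pos⟩
  have hp : Function.Periodic F π := hper
  have hc : Continuous hp.lift := continuous_quot_lift _ hF
  set f : C(AddCircle π, ℂ) := ⟨hp.lift, hc⟩ with hf
  have hlift : ∀ x : ℝ, f (x : AddCircle π) = F x := fun x => hp.lift_coe x
  have hcoef : ∀ n, fourierCoeff f n = 0 := by
    intro n
    rw [fourierCoeff_eq_intervalIntegral f n 0, zero_add]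
    have e : ∀ x : ℝ, (fourier (-n)) (x : AddCircle π) • f (x : AddCircle π) = ee (-n) x * F x := by
      intro x
      rw [hlift, fourier_coe_apply, smul_eq_mul, ee]
      congr 2
      have := Complex.ofReal_ne_zero.2 Real.pi_pos.ne'
      field_simp
    simp only [e]
    have := h n
    rw [fc] at this
    rw [this, smul_zero]
  have hz : fourierCoeff f = 0 := funext hcoef
  have hs := hasSum_fourier_series_of_summable (f := f) (by rw [hz]; exact summable_zero)
  have h0 : f = 0 := by
    refine hs.unique ?_
    simp only [hcoef, zero_smul]
    exact hasSum_zero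
  funext x
  rw [← hlift, h0]; rfl

lemma exists_lipschitz {Ω : ℝ → ℝ} (hΩ : SatisfiesH Ω) :
    ∃ L, 0 ≤ L ∧ ∀ x y, ‖Ω x - Ω y‖ ≤ L * |x - y| := by
  have hd : Differentiable ℝ Ω := hΩ.1.differentiable (by simp)
  have hc : Continuous (deriv Ω) := hΩ.1.continuous_deriv (by simp)
  have hper : Function.Periodic (deriv Ω) π := by
    intro x
    rw [← deriv_comp_add_const]
    congr 1
    funext y
    exact hΩ.2.2.2 y
  obtain ⟨C, hC⟩ := isCompact_Icc.exists_bound_of_continuousOn (s := Icc (0 : ℝ) π) hc.continuousOn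
  have hall : ∀ x, ‖deriv Ω x‖ ≤ C := by
    intro x
    obtain ⟨y, hy, hxy⟩ := hper.exists_mem_Ico₀ Real.pi_pos x
    rw [hxy]
    exact hC y ⟨hy.1, hy.2.le⟩
  refine ⟨C, (norm_nonneg _).trans (hall 0), fun x y => ?_⟩
  have := Convex.norm_image_sub_le_of_norm_deriv_le (s := univ) (f := Ω)
    (fun x _ => hd x) (fun x _ => hall x) convex_univ (mem_univ y) (mem_univ x)
  simpa using this

/-- The transformed angle function, written with the kernel `|sin|^{s-2}` centred at the
evaluation point; it equals `Ω̃` shifted by `π / 2`. -/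
def NN (s : ℝ) (Ω : ℝ → ℝ) (ψ : ℝ) : ℝ :=
  2 * tauC (2 - s) * (∫ t in (0 : ℝ)..π, Real.sin t ^ (s - 2) * (Ω (ψ + t) - Ω ψ)) + cC s * Ω ψ

lemma integral_two_periods {f : ℝ → ℝ} (hf : Function.Periodic f π) (a : ℝ)
    (hi : IntervalIntegrable (fun t => f (a + t)) volume 0 π) :
    ∫ x in (-π)..π, f x = 2 * ∫ t in (0 : ℝ)..π, f (a + t) := by
  have hg : Function.Periodic (fun t => f (a + t)) π := fun t => by
    simp only [← add_assoc, hf (a + t)]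
  have h1 : ∫ x in (-π)..π, f x = ∫ t in (-π - a)..(π - a), f (a + t) := by
    rw [intervalIntegral.integral_comp_add_left]; congr 1 <;> ring
  have h2 := hg.intervalIntegral_add_zsmul_eq 2 (-π - a)
    (hg.intervalIntegrable Real.pi_pos.ne' (t := 0) (by simpa using hi))
  have h3 := hg.intervalIntegral_add_eq (-π - a) 0
  rw [h3, zero_add] at h2
  rw [h1, show π - a = -π - a + (2 : ℤ) • π by simp; ring, h2]
  simp

lemma reg_bound {s L : ℝ} {Ω : ℝ → ℝ} (hL : 0 ≤ L) (hΩ : SatisfiesH Ω)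
    (h : ∀ x y, ‖Ω x - Ω y‖ ≤ L * |x - y|) (ψ : ℝ) {t : ℝ} (ht : t ∈ Ioo 0 π) :
    ‖Real.sin t ^ (s - 2) * (Ω (ψ + t) - Ω ψ)‖ ≤ L * (π / 2) * Real.sin t ^ (s - 1) := by
  have h0 := Real.rpow_nonneg (Real.sin_pos_of_mem_Ioo ht).le (s - 2)
  rw [norm_mul, Real.norm_of_nonneg h0, ← sin_rpow_sub_two_mul ht]
  have := norm_sub_le_sin hL hΩ.2.2.2 h ψ (Ioo_subset_Icc_self ht)
  nlinarith [mul_le_mul_of_nonneg_left this h0]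

lemma Omt_eq_NN {s : ℝ} (hs0 : 0 < s) {Ω : ℝ → ℝ} (hΩ : SatisfiesH Ω) (φ : ℝ) :
    Omt s Ω φ = NN s Ω (φ + π / 2) := by
  obtain ⟨L, hL, hlip⟩ := exists_lipschitz hΩ
  have hcongr : ∀ t ∈ uIcc 0 π,
      |Real.cos (φ - (φ + π / 2 + t))| ^ (-2 + s) * (Ω (φ + π / 2 + t) - Ω (φ + π / 2)) =
      Real.sin t ^ (s - 2) * (Ω (φ + π / 2 + t) - Ω (φ + π / 2)) := by
    intro t ht
    rw [uIcc_of_le Real.pi_pos.le] at ht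
    rw [show φ - (φ + π / 2 + t) = -(t + π / 2) by ring, Real.cos_neg, Real.cos_add_pi_div_two,
      abs_neg, abs_of_nonneg (Real.sin_nonneg_of_mem_Icc ht), neg_add_eq_sub]
  have hmeas : Measurable fun t => Real.sin t ^ (s - 2) * (Ω (φ + π / 2 + t) - Ω (φ + π / 2)) := by
    have := hΩ.1.continuous.measurable
    fun_prop
  have hi := intervalIntegrable_of_le_sin hmeas (by linarith : -1 < s - 1)
    (fun t ht => reg_bound hL hΩ hlip (φ + π / 2) ht)
  have hper : Function.Periodic
      (fun θ => |Real.cos (φ - θ)| ^ (-2 + s) * (Ω θ - Ω (φ + π / 2))) π := by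
    intro θ
    simp only [hΩ.2.2.2, ← sub_sub, Real.cos_sub_pi, abs_neg]
  unfold Omt NN
  rw [integral_two_periods hper (φ + π / 2)
    (hi.congr fun t ht => (hcongr t (uIoc_subset_uIcc ht)).symm), intervalIntegral.integral_congr hcongr]
  ring

section inversion

variable {s : ℝ} {Ω : ℝ → ℝ}

lemma NN_coe (ψ : ℝ) : (NN s Ω ψ : ℂ) =
    2 * tauC (2 - s) * cv (fun t => Real.sin t ^ (s - 2)) 1 (fun x => (Ω x : ℂ)) ψ +
      cC s * Ω ψ := by
  unfold NN cv
  push_cast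
  rw [← intervalIntegral.integral_ofReal]
  push_cast
  simp only [one_mul]

lemma reg_data (hs0 : 0 < s) (hΩ : SatisfiesH Ω) : ∃ g : ℝ → ℝ, IntegrableOn g (Ioo 0 π) ∧
    ∀ ψ, ∀ t ∈ Ioo 0 π, ‖((Real.sin t ^ (s - 2) : ℝ) : ℂ) *
      ((Ω (ψ + t) : ℂ) - 1 * (Ω ψ : ℂ))‖ ≤ g t := by
  obtain ⟨L, hL, hlip⟩ := exists_lipschitz hΩ
  refine ⟨fun t => L * (π / 2) * Real.sin t ^ (s - 1),
    (integrableOn_sin_rpow (by linarith)).const_mul _, fun ψ t ht => ?_⟩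
  have := reg_bound (s := s) hL hΩ hlip ψ ht
  rw [one_mul]
  exact_mod_cast this

lemma NN_periodic (hΩ : SatisfiesH Ω) (ψ : ℝ) : NN s Ω (ψ + π) = NN s Ω ψ := by
  unfold NN
  simp only [add_right_comm ψ π, hΩ.2.2.2]

lemma NN_continuous (hs0 : 0 < s) (hΩ : SatisfiesH Ω) : Continuous (NN s Ω) := by
  obtain ⟨g, hg, hb⟩ := reg_data hs0 hΩ
  have hF : Continuous fun x => (Ω x : ℂ) := Complex.continuous_ofReal.comp hΩ.1.continuous
  have h1 := cv_continuous (w := fun t => Real.sin t ^ (s - 2)) (δ := 1)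
    (Real.measurable_sin.pow_const _) hF hg hb
  have h2 : Continuous fun ψ => (NN s Ω ψ : ℂ) := by
    simp only [NN_coe]
    exact (continuous_const.mul h1).add (continuous_const.mul hF)
  have := Complex.continuous_re.comp h2
  simpa [Function.comp_def] using this

lemma exists_NN_bound (hs0 : 0 < s) (hΩ : SatisfiesH Ω) : ∃ C, 0 ≤ C ∧ ∀ ψ, ‖NN s Ω ψ‖ ≤ C := by
  obtain ⟨C, hC⟩ := isCompact_Icc.exists_bound_of_continuousOn (s := Icc (0 : ℝ) π)
    (NN_continuous hs0 hΩ).continuousOn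
  have hper : Function.Periodic (NN s Ω) π := NN_periodic hΩ
  have hall : ∀ x, ‖NN s Ω x‖ ≤ C := by
    intro x
    obtain ⟨y, hy, hxy⟩ := hper.exists_mem_Ico₀ Real.pi_pos x
    rw [hxy]
    exact hC y ⟨hy.1, hy.2.le⟩
  exact ⟨C, (norm_nonneg _).trans (hall 0), hall⟩

lemma fc_NN (hs0 : 0 < s) (hΩ : SatisfiesH Ω) (n : ℤ) :
    fc (fun ψ => (NN s Ω ψ : ℂ)) n = mulC s n * fc (fun x => (Ω x : ℂ)) n := by
  obtain ⟨g, hg, hb⟩ := reg_data hs0 hΩ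
  have hF : Continuous fun x => (Ω x : ℂ) := Complex.continuous_ofReal.comp hΩ.1.continuous
  have hw : Measurable fun t : ℝ => Real.sin t ^ (s - 2) := Real.measurable_sin.pow_const _
  have h1 := cv_continuous (w := fun t => Real.sin t ^ (s - 2)) (δ := 1) hw hF hg hb
  have h2 := fc_cv (w := fun t => Real.sin t ^ (s - 2)) (δ := 1) hw hF
    (fun x => by simp only [hΩ.2.2.2]) hg hb n
  change _ = regC s n * _ at h2
  have e : ∀ ψ, ee (-n) ψ * (NN s Ω ψ : ℂ) = 2 * tauC (2 - s) *
      (ee (-n) ψ * cv (fun t => Real.sin t ^ (s - 2)) 1 (fun x => (Ω x : ℂ)) ψ) +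
      cC s * (ee (-n) ψ * Ω ψ) := fun ψ => by rw [NN_coe]; ring
  have i1 : IntervalIntegrable (fun ψ => ee (-n) ψ *
      cv (fun t => Real.sin t ^ (s - 2)) 1 (fun x => (Ω x : ℂ)) ψ) volume 0 π :=
    ((continuous_ee _).mul h1).intervalIntegrable _ _
  have i2 : IntervalIntegrable (fun ψ => ee (-n) ψ * (Ω ψ : ℂ)) volume 0 π :=
    ((continuous_ee _).mul hF).intervalIntegrable _ _
  have h3 : fc (fun ψ => (NN s Ω ψ : ℂ)) n = 2 * tauC (2 - s) *
      fc (cv (fun t => Real.sin t ^ (s - 2)) 1 (fun x => (Ω x : ℂ))) n +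
      cC s * fc (fun x => (Ω x : ℂ)) n := by
    unfold fc
    simp only [e]
    rw [intervalIntegral.integral_add (i1.const_mul _) (i2.const_mul _),
      intervalIntegral.integral_const_mul, intervalIntegral.integral_const_mul]
  rw [h3, h2, mulC]
  ring

/-- Inversion: convolving the transformed angle function with `|sin|^{-s}` recovers `Ω`. -/
lemma inversion_NN (hs0 : 0 < s) (hs1 : s < 1) (hΩ : SatisfiesH Ω) (θ : ℝ) :
    Ω θ = 2 * tauC s * ∫ t in (0 : ℝ)..π, Real.sin t ^ (-s) * NN s Ω (θ + t) := by
  obtain ⟨C, hC0, hC⟩ := exists_NN_bound hs0 hΩ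
  have hF : Continuous fun x => (Ω x : ℂ) := Complex.continuous_ofReal.comp hΩ.1.continuous
  have hN : Continuous fun x => (NN s Ω x : ℂ) :=
    Complex.continuous_ofReal.comp (NN_continuous hs0 hΩ)
  have hw : Measurable fun t : ℝ => Real.sin t ^ (-s) := Real.measurable_sin.pow_const _
  have hg : IntegrableOn (fun t => C * Real.sin t ^ (-s)) (Ioo 0 π) :=
    (integrableOn_sin_rpow (by linarith)).const_mul _
  have hb : ∀ ψ, ∀ t ∈ Ioo 0 π, ‖((Real.sin t ^ (-s) : ℝ) : ℂ) *
      ((NN s Ω (ψ + t) : ℂ) - 0 * (NN s Ω ψ : ℂ))‖ ≤ C * Real.sin t ^ (-s) := by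
    intro ψ t ht
    rw [norm_mul, norm_sin_rpow _ ht, zero_mul, sub_zero, Complex.norm_real, mul_comm]
    exact mul_le_mul_of_nonneg_right (hC _) (Real.rpow_nonneg (Real.sin_pos_of_mem_Ioo ht).le _)
  set H := cv (fun t => Real.sin t ^ (-s)) 0 (fun x => (NN s Ω x : ℂ)) with hH
  have h1 : Continuous H := cv_continuous hw hN hg hb
  have hNper : ∀ x, ((NN s Ω (x + π) : ℝ) : ℂ) = NN s Ω x := fun x => by rw [NN_periodic hΩ]
  have h2 : ∀ n, fc H n = lamC s n * fc (fun x => (NN s Ω x : ℂ)) n := by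
    intro n
    have := fc_cv (w := fun t => Real.sin t ^ (-s)) (δ := 0) hw hN hNper hg hb n
    simp only [sub_zero] at this
    exact this
  have hzero : (fun x => (Ω x : ℂ) - 2 * tauC s * H x) = 0 := by
    refine fc_injective (hF.sub (continuous_const.mul h1)) (fun x => ?_) fun n => ?_
    · rw [hΩ.2.2.2, hH, cv_periodic hNper]
    · have i1 : IntervalIntegrable (fun ψ => ee (-n) ψ * H ψ) volume 0 π :=
        ((continuous_ee _).mul h1).intervalIntegrable _ _
      have i2 : IntervalIntegrable (fun ψ => ee (-n) ψ * (Ω ψ : ℂ)) volume 0 π :=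
        ((continuous_ee _).mul hF).intervalIntegrable _ _
      have e : ∀ ψ, ee (-n) ψ * ((Ω ψ : ℂ) - 2 * tauC s * H ψ) =
        ee (-n) ψ * Ω ψ - 2 * tauC s * (ee (-n) ψ * H ψ) := fun ψ => by ring
      unfold fc
      simp only [e]
      rw [intervalIntegral.integral_sub i2 (i1.const_mul _), intervalIntegral.integral_const_mul]
      change fc (fun x => (Ω x : ℂ)) n - 2 * tauC s * fc H n = 0
      rw [h2, fc_NN hs0 hΩ]
      linear_combination (-fc (fun x => (Ω x : ℂ)) n) * lam_mul hs0 hs1 n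
  have hθ := congrFun hzero θ
  simp only [Pi.zero_apply, hH, cv, zero_mul, sub_zero] at hθ
  have hr : ∫ t in (0 : ℝ)..π, ((Real.sin t ^ (-s) : ℝ) : ℂ) * (NN s Ω (θ + t) : ℂ) =
      ((∫ t in (0 : ℝ)..π, Real.sin t ^ (-s) * NN s Ω (θ + t) : ℝ) : ℂ) := by
    rw [← intervalIntegral.integral_ofReal]; push_cast; rfl
  rw [hr, sub_eq_zero] at hθ
  exact_mod_cast hθ

lemma Omt_periodic (hs0 : 0 < s) (hΩ : SatisfiesH Ω) (φ : ℝ) : Omt s Ω (φ + π) = Omt s Ω φ := by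
  rw [Omt_eq_NN hs0 hΩ, Omt_eq_NN hs0 hΩ, add_right_comm, NN_periodic hΩ]

lemma Omt_continuous (hs0 : 0 < s) (hΩ : SatisfiesH Ω) : Continuous (Omt s Ω) := by
  have : Omt s Ω = fun φ => NN s Ω (φ + π / 2) := funext fun φ => Omt_eq_NN hs0 hΩ φ
  rw [this]
  exact (NN_continuous hs0 hΩ).comp (by fun_prop)

lemma exists_Omt_bound (hs0 : 0 < s) (hΩ : SatisfiesH Ω) :
    ∃ C, 0 ≤ C ∧ ∀ φ, ‖Omt s Ω φ‖ ≤ C := by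
  obtain ⟨C, hC0, hC⟩ := exists_NN_bound hs0 hΩ
  exact ⟨C, hC0, fun φ => by rw [Omt_eq_NN hs0 hΩ]; exact hC _⟩

/-- The angle function is the average of `Ω̃` against `|cos|^{-s}`: this is the one-dimensional
(plane wave) decomposition of the kernel `|x|^{-s} Ω(θ(x))`. -/
lemma inversion (hs0 : 0 < s) (hs1 : s < 1) (hΩ : SatisfiesH Ω) (θ : ℝ) :
    Ω θ = tauC s * ∫ φ in (-π)..π, |Real.cos (φ - θ)| ^ (-s) * Omt s Ω φ := by
  obtain ⟨C, hC0, hC⟩ := exists_NN_bound hs0 hΩ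
  have hcongr : ∀ t ∈ uIcc 0 π,
      |Real.cos (θ - π / 2 + t - θ)| ^ (-s) * Omt s Ω (θ - π / 2 + t) =
      Real.sin t ^ (-s) * NN s Ω (θ + t) := by
    intro t ht
    rw [uIcc_of_le Real.pi_pos.le] at ht
    rw [show θ - π / 2 + t - θ = t - π / 2 by ring, Real.cos_sub_pi_div_two,
      abs_of_nonneg (Real.sin_nonneg_of_mem_Icc ht), Omt_eq_NN hs0 hΩ]
    congr 2; ring
  have hmeas : Measurable fun t => Real.sin t ^ (-s) * NN s Ω (θ + t) := by
    have := (NN_continuous hs0 hΩ).measurable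
    fun_prop
  have hi := intervalIntegrable_of_le_sin hmeas (C := C) (by linarith : -1 < -s) (fun t ht => by
    have h0 := Real.rpow_nonneg (Real.sin_pos_of_mem_Ioo ht).le (-s)
    rw [norm_mul, Real.norm_of_nonneg h0, mul_comm]
    exact mul_le_mul_of_nonneg_right (hC _) h0)
  have hper : Function.Periodic (fun φ => |Real.cos (φ - θ)| ^ (-s) * Omt s Ω φ) π := by
    intro φ
    simp only [Omt_periodic hs0 hΩ, add_sub_right_comm, Real.cos_add_pi, abs_neg]
  rw [integral_two_periods hper (θ - π / 2) (hi.congr fun t ht => (hcongr t (uIoc_subset_uIcc ht)).symm),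
    intervalIntegral.integral_congr hcongr, ← mul_assoc, mul_comm (tauC s) 2]
  exact inversion_NN hs0 hs1 hΩ θ

end inversion

/-! ### One-dimensional projections of the density `ρ₂` -/

section projection

variable {s : ℝ}

lemma measurePreserving_Rot (η : ℝ) : MeasurePreserving (Rot η) (volume : Measure (ℝ × ℝ)) volume := by
  set f : (ℝ × ℝ) →ₗ[ℝ] (ℝ × ℝ) := Matrix.toLin (Module.Basis.finTwoProd ℝ) (Module.Basis.finTwoProd ℝ)
    !![Real.cos η, -Real.sin η; Real.sin η, Real.cos η] with hf
  have hfR : ⇑f = Rot η := by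
    funext x
    rw [hf, Matrix.toLin_finTwoProd_apply]
    unfold Rot
    ext <;> simp <;> ring
  have hdet : LinearMap.det f = 1 := by
    rw [hf, LinearMap.det_toLin, Matrix.det_fin_two_of]
    have := Real.sin_sq_add_cos_sq η
    linarith
  refine ⟨by unfold Rot; fun_prop, ?_⟩
  rw [← hfR, Measure.map_linearMap_addHaar_eq_smul_addHaar volume (by rw [hdet]; exact one_ne_zero),
    hdet]
  simp

lemma nrm_sq (x : ℝ × ℝ) : nrm x ^ 2 = x.1 ^ 2 + x.2 ^ 2 := Real.sq_sqrt (by positivity)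

lemma rho2_Rot (η : ℝ) (x : ℝ × ℝ) : rho2 s (Rot η x) = rho2 s x := by
  have : nrm (Rot η x) ^ 2 = nrm x ^ 2 := by
    rw [nrm_sq, nrm_sq]
    simp only [Rot]
    linear_combination (x.1 ^ 2 + x.2 ^ 2) * Real.sin_sq_add_cos_sq η
  unfold rho2
  rw [this]

lemma measurable_rho2 : Measurable (rho2 s) := by
  unfold rho2 nrm; fun_prop

lemma sin_half_pos (hs0 : 0 < s) (hs1 : s < 1) : 0 < Real.sin (s * π / 2) := by
  apply Real.sin_pos_of_pos_of_lt_pi <;> nlinarith [Real.pi_pos]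

lemma C2_pos (hs0 : 0 < s) (hs1 : s < 1) : 0 < C2 s := by
  have := sin_half_pos hs0 hs1
  have := Real.pi_pos
  unfold C2; positivity

lemma R2_pos (hs0 : 0 < s) (hs1 : s < 1) : 0 < R2 s := by
  have := sin_half_pos hs0 hs1
  have := Real.pi_pos
  unfold R2; positivity

lemma C1_pos (hs0 : 0 < s) (hs1 : s < 1) : 0 < C1 s := by
  have := cos_half_pos hs0 hs1
  have := Real.pi_pos
  unfold C1; positivity

lemma rho2_nonneg (hs0 : 0 < s) (hs1 : s < 1) (x : ℝ × ℝ) : 0 ≤ rho2 s x :=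
  mul_nonneg (C2_pos hs0 hs1).le (Real.rpow_nonneg (le_max_right _ _) _)

/-- The mass of a one-dimensional section of `(X - u²)₊^{s/2}`. -/
lemma lintegral_section (hs0 : 0 < s) {X : ℝ} (hX : 0 < X) :
    ∫⁻ u : ℝ, ENNReal.ofReal ((max (X - u ^ 2) 0) ^ (s / 2)) =
      ENNReal.ofReal (X ^ ((1 + s) / 2) * BetaR (1 / 2) (1 + s / 2)) := by
  set r := √X with hr
  have hr0 : 0 < r := Real.sqrt_pos.2 hX
  have hrX : r ^ 2 = X := Real.sq_sqrt hX.le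
  have himg : (fun x : ℝ => r * x) '' Ioo (-1) 1 = Ioo (-r) r := by
    rw [Set.image_mul_left_Ioo hr0]; simp
  have hsupp : ∫⁻ u : ℝ, ENNReal.ofReal ((max (X - u ^ 2) 0) ^ (s / 2)) =
      ∫⁻ u in Ioo (-r) r, ENNReal.ofReal ((max (X - u ^ 2) 0) ^ (s / 2)) := by
    rw [← lintegral_indicator measurableSet_Ioo]
    refine lintegral_congr fun u => ?_
    by_cases hu : u ∈ Ioo (-r) r
    · rw [Set.indicator_of_mem hu]
    · rw [Set.indicator_of_notMem hu, max_eq_right, Real.zero_rpow (by linarith), ENNReal.ofReal_zero]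
      by_contra! h
      apply hu
      exact abs_lt.1 (abs_lt_of_sq_lt_sq (by linarith) hr0.le)
  have h := lintegral_one_sub_sq (p := 1 + s / 2) (by linarith)
  have e : X ^ ((1 + s) / 2) = r * X ^ (s / 2) := by
    rw [hr, Real.sqrt_eq_rpow, ← Real.rpow_add hX]; congr 1; ring
  rw [hsupp, ← himg,
    lintegral_image_eq_lintegral_abs_deriv_mul (f' := fun _ => r) measurableSet_Ioo
    (fun x _ => by simpa using ((hasDerivAt_id x).const_mul r).hasDerivWithinAt)
    (fun x _ y _ h => by simpa [hr0.ne'] using h),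
    ENNReal.ofReal_mul (by positivity), ← h, ← lintegral_const_mul' _ _ ENNReal.ofReal_ne_top]
  refine setLIntegral_congr_fun measurableSet_Ioo fun v hv => ?_
  have h3 : (0 : ℝ) < 1 - v ^ 2 := by nlinarith [hv.1, hv.2]
  have h4 : X - (r * v) ^ 2 = X * (1 - v ^ 2) := by rw [mul_pow, hrX]; ring
  rw [h4, max_eq_left (by positivity), Real.mul_rpow hX.le h3.le, abs_of_pos hr0, e,
    ← ENNReal.ofReal_mul hr0.le, ← ENNReal.ofReal_mul (by positivity)]
  congr 1
  rw [show 1 + s / 2 - 1 = s / 2 by ring]; ring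

/-- Every one-dimensional projection of `ρ₂` is a multiple of `(R₂² - t²)₊^{(1+s)/2}`. -/
lemma lintegral_rho2_proj (hs0 : 0 < s) (hs1 : s < 1) (η : ℝ) {h : ℝ → ℝ≥0∞} (hh : Measurable h) :
    ∫⁻ p : ℝ × ℝ, ENNReal.ofReal (rho2 s p) * h (p.1 * Real.cos η + p.2 * Real.sin η) =
      ENNReal.ofReal (C2 s * BetaR (1 / 2) (1 + s / 2) * R2 s ^ (s + 2)) *
      ∫⁻ u in Ioo (-1 : ℝ) 1, ENNReal.ofReal ((1 - u ^ 2) ^ ((1 + s) / 2)) * h (R2 s * u) := by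
  have hR := R2_pos hs0 hs1
  have hC := C2_pos hs0 hs1
  have hB := BetaR_pos (x := 1 / 2) (y := 1 + s / 2) (by norm_num) (by linarith)
  set R := R2 s with hRdef
  have hrot : ∀ p : ℝ × ℝ, (Rot η p).1 * Real.cos η + (Rot η p).2 * Real.sin η = p.1 := by
    intro p
    simp only [Rot]
    linear_combination p.1 * Real.sin_sq_add_cos_sq η
  have hm : Measurable fun p : ℝ × ℝ => ENNReal.ofReal (rho2 s p) *
      h (p.1 * Real.cos η + p.2 * Real.sin η) := by
    have := measurable_rho2 (s := s)
    fun_prop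
  rw [← (measurePreserving_Rot η).lintegral_comp hm]
  simp only [rho2_Rot, hrot]
  have hm2 : Measurable fun p : ℝ × ℝ => ENNReal.ofReal (rho2 s p) * h p.1 := by
    have := measurable_rho2 (s := s)
    fun_prop
  rw [Measure.volume_eq_prod, lintegral_prod _ hm2.aemeasurable]
  have hin : ∀ x : ℝ, ∫⁻ y : ℝ, ENNReal.ofReal (rho2 s (x, y)) * h x =
      (Ioo (-R) R).indicator (fun x => ENNReal.ofReal (C2 s * BetaR (1 / 2) (1 + s / 2) *
        (R ^ 2 - x ^ 2) ^ ((1 + s) / 2)) * h x) x := by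
    intro x
    have hmx : Measurable fun y : ℝ => ENNReal.ofReal (rho2 s (x, y)) := by
      have := measurable_rho2 (s := s)
      fun_prop
    rw [lintegral_mul_const _ hmx]
    have e : ∀ y : ℝ, ENNReal.ofReal (rho2 s (x, y)) = ENNReal.ofReal (C2 s) *
        ENNReal.ofReal ((max (R ^ 2 - x ^ 2 - y ^ 2) 0) ^ (s / 2)) := by
      intro y
      rw [← ENNReal.ofReal_mul hC.le, rho2, nrm_sq]
      congr 4
      simp only; ring
    simp only [e]
    rw [lintegral_const_mul' _ _ ENNReal.ofReal_ne_top]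
    by_cases hx : x ∈ Ioo (-R) R
    · have hX : 0 < R ^ 2 - x ^ 2 := by nlinarith [hx.1, hx.2]
      rw [Set.indicator_of_mem hx, lintegral_section hs0 hX, ← ENNReal.ofReal_mul hC.le]
      congr 2; ring
    · have hX : R ^ 2 - x ^ 2 ≤ 0 := by
        by_contra! hlt
        exact hx (abs_lt.1 (abs_lt_of_sq_lt_sq (by linarith) hR.le))
      have e0 : ∀ y : ℝ, ENNReal.ofReal ((max (R ^ 2 - x ^ 2 - y ^ 2) 0) ^ (s / 2)) = 0 := by
        intro y
        rw [max_eq_right (by nlinarith [sq_nonneg y]), Real.zero_rpow (by linarith),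
          ENNReal.ofReal_zero]
      rw [Set.indicator_of_notMem hx]
      simp [e0]
  have himg : (fun x : ℝ => R * x) '' Ioo (-1) 1 = Ioo (-R) R := by
    rw [Set.image_mul_left_Ioo hR]; simp
  simp only [hin]
  rw [lintegral_indicator measurableSet_Ioo, ← himg,
    lintegral_image_eq_lintegral_abs_deriv_mul (f' := fun _ => R) measurableSet_Ioo
    (fun x _ => by simpa using ((hasDerivAt_id x).const_mul R).hasDerivWithinAt)
    (fun x _ y _ h => by simpa [hR.ne'] using h), ← lintegral_const_mul' _ _ ENNReal.ofReal_ne_top]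
  refine setLIntegral_congr_fun measurableSet_Ioo fun v hv => ?_
  have h3 : (0 : ℝ) < 1 - v ^ 2 := by nlinarith [hv.1, hv.2]
  have h4 : R ^ 2 - (R * v) ^ 2 = R ^ 2 * (1 - v ^ 2) := by ring
  rw [h4, Real.mul_rpow (by positivity) h3.le, abs_of_pos hR, ← mul_assoc,
    ← ENNReal.ofReal_mul hR.le, ← mul_assoc (ENNReal.ofReal _) (ENNReal.ofReal _),
    ← ENNReal.ofReal_mul (by positivity)]
  congr 2
  have e : R * (R ^ 2) ^ ((1 + s) / 2) = R ^ (s + 2) := by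
    rw [← Real.rpow_natCast, ← Real.rpow_mul hR.le]
    nth_rewrite 1 [← Real.rpow_one R]
    rw [← Real.rpow_add hR]; congr 1; push_cast; ring
  rw [← e]; ring

/-- A special value of a product of Beta functions, equivalent to `R₂` and `C₂` normalising
`ρ₂`. -/
lemma BetaR_prod (hs0 : 0 < s) :
    BetaR (1 / 2) (1 + s / 2) * BetaR (1 / 2) ((3 + s) / 2) = 2 * π / (2 + s) := by
  have p1 := Real.Gamma_pos_of_pos (show 0 < 1 + s / 2 by linarith)
  have p2 := Real.Gamma_pos_of_pos (show 0 < (3 + s) / 2 by linarith)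
  unfold BetaR
  rw [show 1 / 2 + (1 + s / 2) = (3 + s) / 2 by ring,
    show 1 / 2 + (3 + s) / 2 = (1 + s / 2) + 1 by ring, Real.Gamma_add_one (by linarith),
    Real.Gamma_one_half_eq]
  generalize Real.Gamma (1 + s / 2) = G at *
  generalize Real.Gamma ((3 + s) / 2) = H at *
  have h := Real.sq_sqrt Real.pi_pos.le
  field_simp
  linear_combination h

lemma R2_rpow (hs0 : 0 < s) (hs1 : s < 1) :
    R2 s ^ (s + 2) = (C2 s * (2 * π / (2 + s)))⁻¹ := by
  have := sin_half_pos hs0 hs1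
  have hp := Real.pi_pos
  unfold R2
  rw [← Real.rpow_mul (by positivity), show -(1 / (s + 2)) * (s + 2) = -1 by field_simp,
    Real.rpow_neg_one, C2]
  congr 1
  field_simp
  ring

lemma R1_rpow (hs0 : 0 < s) (hs1 : s < 1) :
    R1 s ^ (s + 2) = (C1 s * BetaR (1 / 2) ((3 + s) / 2))⁻¹ := by
  have h1 := C1_pos hs0 hs1
  have h2 := BetaR_pos (x := 1 / 2) (y := (3 + s) / 2) (by norm_num) (by linarith)
  unfold R1
  rw [← Real.rpow_mul (by positivity), show -(1 / (s + 2)) * (s + 2) = -1 by field_simp,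
    Real.rpow_neg_one]

/-- The factor `(R₁/R₂)^{2+s}` is the ratio of the constants of the projection of `ρ₂` and of
the density `ρ₁`. -/
lemma ratio_rpow (hs0 : 0 < s) (hs1 : s < 1) :
    (R1 s / R2 s) ^ (2 + s) = C2 s * BetaR (1 / 2) (1 + s / 2) / C1 s := by
  have h1 := C1_pos hs0 hs1
  have h2 := BetaR_pos (x := 1 / 2) (y := (3 + s) / 2) (by norm_num) (by linarith)
  have h3 := C2_pos hs0 hs1
  have h4 : 0 < R1 s := by unfold R1; positivity
  have hB := BetaR_prod hs0
  rw [add_comm 2 s, Real.div_rpow h4.le (R2_pos hs0 hs1).le, R1_rpow hs0 hs1, R2_rpow hs0 hs1, ← hB]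
  field_simp

/-- The total mass of `ρ₂`, computed from a one-dimensional projection. -/
lemma mass_const (hs0 : 0 < s) (hs1 : s < 1) :
    C2 s * BetaR (1 / 2) (1 + s / 2) * R2 s ^ (s + 2) * BetaR (1 / 2) ((3 + s) / 2) = 1 := by
  have h2 := BetaR_pos (x := 1 / 2) (y := (3 + s) / 2) (by norm_num) (by linarith)
  have h5 := BetaR_pos (x := 1 / 2) (y := 1 + s / 2) (by norm_num) (by linarith)
  have h3 := C2_pos hs0 hs1
  rw [R2_rpow hs0 hs1, ← BetaR_prod hs0]
  generalize BetaR (1 / 2) (1 + s / 2) = X at *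
  generalize BetaR (1 / 2) ((3 + s) / 2) = Y at *
  field_simp

lemma lintegral_rho2 (hs0 : 0 < s) (hs1 : s < 1) : ∫⁻ p : ℝ × ℝ, ENNReal.ofReal (rho2 s p) = 1 := by
  have h := lintegral_rho2_proj hs0 hs1 0 (h := fun _ => 1) measurable_const
  have h1 := lintegral_one_sub_sq (p := (3 + s) / 2) (by linarith)
  rw [show (3 + s) / 2 - 1 = (1 + s) / 2 by ring] at h1
  simp only [mul_one] at h
  have hR := R2_pos hs0 hs1
  have hC := C2_pos hs0 hs1
  have hB := BetaR_pos (x := 1 / 2) (y := 1 + s / 2) (by norm_num) (by linarith)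
  rw [h, h1, ← ENNReal.ofReal_mul (by positivity), mass_const hs0 hs1, ENNReal.ofReal_one]

end projection

/-! ### The measure `ρ_{a,b}` -/

section rhoAB

variable {s a b : ℝ}

lemma lintegral_rhoAB {f : ℝ × ℝ → ℝ≥0∞} (hf : Measurable f) :
    ∫⁻ y, f y ∂(rhoAB s a b) =
      ∫⁻ p : ℝ × ℝ, ENNReal.ofReal (rho2 s p) * f (a * p.1, b * p.2) := by
  have hR : (fun x : ℝ × ℝ => Rot 0 (a * x.1, b * x.2)) = fun x => (a * x.1, b * x.2) := by
    funext x; simp [Rot]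
  have hm : Measurable fun x : ℝ × ℝ => ((a * x.1, b * x.2) : ℝ × ℝ) := by fun_prop
  have h2 := measurable_rho2 (s := s)
  unfold rhoAB rhoE rho2meas
  rw [hR, lintegral_map hf hm]
  exact lintegral_withDensity_eq_lintegral_mul _ (by fun_prop) (hf.comp hm)

lemma isProbabilityMeasure_rhoAB (hs0 : 0 < s) (hs1 : s < 1) :
    IsProbabilityMeasure (rhoAB s a b) := by
  constructor
  have h := lintegral_rhoAB (s := s) (a := a) (b := b) (f := fun _ => 1) measurable_const
  simp only [mul_one, lintegral_const, one_mul] at h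
  rw [h, lintegral_rho2 hs0 hs1]

lemma measurePreserving_neg_rhoAB : MeasurePreserving (fun y : ℝ × ℝ => -y) (rhoAB s a b)
    (rhoAB s a b) := by
  refine ⟨by fun_prop, ?_⟩
  refine Measure.ext_of_lintegral _ fun f hf => ?_
  rw [lintegral_map hf (by fun_prop),
    lintegral_rhoAB (f := fun y => f (-y)) (hf.comp (by fun_prop)), lintegral_rhoAB hf,
    ← lintegral_neg_eq_self (fun p : ℝ × ℝ => ENNReal.ofReal (rho2 s p) * f (a * p.1, b * p.2))]
  refine lintegral_congr fun p => ?_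
  have : rho2 s (-p) = rho2 s p := by simp [rho2, nrm]
  rw [this]
  simp

/-- The measure `ρ_{a,b}` is carried by the closed ellipse with semi-axes `a R₂` and `b R₂`. -/
lemma rhoAB_compl (hs0 : 0 < s) (ha : 0 < a) (hb : 0 < b) :
    rhoAB s a b {y | y.1 ^ 2 / a ^ 2 + y.2 ^ 2 / b ^ 2 ≤ R2 s ^ 2}ᶜ = 0 := by
  have hK : MeasurableSet {y : ℝ × ℝ | y.1 ^ 2 / a ^ 2 + y.2 ^ 2 / b ^ 2 ≤ R2 s ^ 2} :=
    measurableSet_le (by fun_prop) (by fun_prop)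
  rw [← lintegral_indicator_one hK.compl,
    lintegral_rhoAB (Measurable.indicator measurable_one hK.compl)]
  rw [← lintegral_zero]
  refine lintegral_congr fun p => ?_
  by_cases hp : p.1 ^ 2 + p.2 ^ 2 ≤ R2 s ^ 2
  · rw [Set.indicator_of_notMem, mul_zero]
    simp only [Set.mem_compl_iff, not_not, Set.mem_ofPred_eq]
    rw [mul_pow, mul_pow, mul_div_cancel_left₀ _ (by positivity),
      mul_div_cancel_left₀ _ (by positivity)]
    exact hp
  · have : rho2 s p = 0 := by
      rw [rho2, nrm_sq, max_eq_right (by linarith), Real.zero_rpow (by linarith), mul_zero]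
    rw [this, ENNReal.ofReal_zero, zero_mul]

lemma abs_le_of_mem_ellipse {R : ℝ} (hR : 0 < R) (ha : 0 < a) (hb : 0 < b) {y : ℝ × ℝ}
    (hy : y.1 ^ 2 / a ^ 2 + y.2 ^ 2 / b ^ 2 ≤ R ^ 2) : |y.1| ≤ a * R ∧ |y.2| ≤ b * R := by
  have h1 : 0 ≤ y.1 ^ 2 / a ^ 2 := by positivity
  have h2 : 0 ≤ y.2 ^ 2 / b ^ 2 := by positivity
  constructor
  · refine abs_le_of_sq_le_sq ?_ (by positivity)
    have h3 : y.1 ^ 2 / a ^ 2 ≤ R ^ 2 := by linarith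
    rw [div_le_iff₀ (by positivity)] at h3
    linarith
  · refine abs_le_of_sq_le_sq ?_ (by positivity)
    have h3 : y.2 ^ 2 / b ^ 2 ≤ R ^ 2 := by linarith
    rw [div_le_iff₀ (by positivity)] at h3
    linarith

lemma ae_abs_le (hs0 : 0 < s) (hs1 : s < 1) (ha : 0 < a) (hb : 0 < b) :
    ∀ᵐ y ∂(rhoAB s a b), |y.1| ≤ a * R2 s ∧ |y.2| ≤ b * R2 s := by
  have h : ∀ᵐ y ∂(rhoAB s a b), y.1 ^ 2 / a ^ 2 + y.2 ^ 2 / b ^ 2 ≤ R2 s ^ 2 :=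
    rhoAB_compl hs0 ha hb
  filter_upwards [h] with y hy using abs_le_of_mem_ellipse (R2_pos hs0 hs1) ha hb hy

lemma integrable_fst_rhoAB (hs0 : 0 < s) (hs1 : s < 1) (ha : 0 < a) (hb : 0 < b) :
    Integrable (fun y : ℝ × ℝ => y.1) (rhoAB s a b) := by
  have := isProbabilityMeasure_rhoAB (a := a) (b := b) hs0 hs1
  refine Integrable.of_bound (by fun_prop) (a * R2 s) ?_
  filter_upwards [ae_abs_le hs0 hs1 ha hb] with y hy using hy.1

lemma integrable_snd_rhoAB (hs0 : 0 < s) (hs1 : s < 1) (ha : 0 < a) (hb : 0 < b) :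
    Integrable (fun y : ℝ × ℝ => y.2) (rhoAB s a b) := by
  have := isProbabilityMeasure_rhoAB (a := a) (b := b) hs0 hs1
  refine Integrable.of_bound (by fun_prop) (b * R2 s) ?_
  filter_upwards [ae_abs_le hs0 hs1 ha hb] with y hy using hy.2

lemma integrable_quad_rhoAB (hs0 : 0 < s) (hs1 : s < 1) (ha : 0 < a) (hb : 0 < b) (A B D : ℝ) :
    Integrable (fun y : ℝ × ℝ => A * y.1 ^ 2 + B * y.2 ^ 2 + 2 * D * y.1 * y.2) (rhoAB s a b) := by
  have := isProbabilityMeasure_rhoAB (a := a) (b := b) hs0 hs1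
  have hm1 : ∀ᵐ y ∂(rhoAB s a b), ‖y.1‖ ≤ a * R2 s := by
    filter_upwards [ae_abs_le hs0 hs1 ha hb] with y hy using hy.1
  have hm2 : ∀ᵐ y ∂(rhoAB s a b), ‖y.2‖ ≤ b * R2 s := by
    filter_upwards [ae_abs_le hs0 hs1 ha hb] with y hy using hy.2
  have i1 := integrable_fst_rhoAB hs0 hs1 ha hb
  have i2 := integrable_snd_rhoAB hs0 hs1 ha hb
  have j1 := i1.mul_bdd (c := a * R2 s) (by fun_prop) hm1
  have j2 := i2.mul_bdd (c := b * R2 s) (by fun_prop) hm2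
  have j3 := i1.mul_bdd (c := b * R2 s) (by fun_prop) hm2
  refine (((j1.const_mul A).add (j2.const_mul B)).add (j3.const_mul (2 * D))).congr
    (.of_forall fun y => ?_)
  simp only [Pi.add_apply]
  ring

/-- The first moments of `ρ_{a,b}` vanish by symmetry, so convolving a quadratic form with it only
adds a constant. -/
lemma integral_quad_rhoAB (hs0 : 0 < s) (hs1 : s < 1) (ha : 0 < a) (hb : 0 < b) (A B D : ℝ)
    (x : ℝ × ℝ) :
    Integrable (fun y : ℝ × ℝ => A * (x.1 - y.1) ^ 2 + B * (x.2 - y.2) ^ 2 +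
        2 * D * (x.1 - y.1) * (x.2 - y.2)) (rhoAB s a b) ∧
    ∫ y, (A * (x.1 - y.1) ^ 2 + B * (x.2 - y.2) ^ 2 +
        2 * D * (x.1 - y.1) * (x.2 - y.2)) ∂(rhoAB s a b) =
      (A * x.1 ^ 2 + B * x.2 ^ 2 + 2 * D * x.1 * x.2) +
      ∫ y, (A * y.1 ^ 2 + B * y.2 ^ 2 + 2 * D * y.1 * y.2) ∂(rhoAB s a b) := by
  have := isProbabilityMeasure_rhoAB (a := a) (b := b) hs0 hs1
  have i1 := integrable_fst_rhoAB hs0 hs1 ha hb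
  have i2 := integrable_snd_rhoAB hs0 hs1 ha hb
  have iq := integrable_quad_rhoAB hs0 hs1 ha hb A B D
  have emb : MeasurableEmbedding (fun y : ℝ × ℝ => -y) :=
    (MeasurableEquiv.neg (ℝ × ℝ)).measurableEmbedding
  have z1 : ∫ y, y.1 ∂(rhoAB s a b) = 0 := by
    have h := measurePreserving_neg_rhoAB.integral_comp (μ := rhoAB s a b) emb
      (fun y : ℝ × ℝ => y.1)
    simp only [Prod.fst_neg, integral_neg] at h
    linarith
  have z2 : ∫ y, y.2 ∂(rhoAB s a b) = 0 := by
    have h := measurePreserving_neg_rhoAB.integral_comp (μ := rhoAB s a b) emb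
      (fun y : ℝ × ℝ => y.2)
    simp only [Prod.snd_neg, integral_neg] at h
    linarith
  set p : ℝ := -(2 * A * x.1 + 2 * D * x.2)
  set q : ℝ := -(2 * B * x.2 + 2 * D * x.1)
  have e : ∀ y : ℝ × ℝ, A * (x.1 - y.1) ^ 2 + B * (x.2 - y.2) ^ 2 +
      2 * D * (x.1 - y.1) * (x.2 - y.2) = (A * x.1 ^ 2 + B * x.2 ^ 2 + 2 * D * x.1 * x.2) +
        (p * y.1 + (q * y.2 + (A * y.1 ^ 2 + B * y.2 ^ 2 + 2 * D * y.1 * y.2))) := by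
    intro y; simp only [p, q]; ring
  simp only [e]
  have i3 : Integrable (fun y : ℝ × ℝ => q * y.2 +
      (A * y.1 ^ 2 + B * y.2 ^ 2 + 2 * D * y.1 * y.2)) (rhoAB s a b) := (i2.const_mul q).add iq
  have i4 : Integrable (fun y : ℝ × ℝ => p * y.1 + (q * y.2 +
      (A * y.1 ^ 2 + B * y.2 ^ 2 + 2 * D * y.1 * y.2))) (rhoAB s a b) := (i1.const_mul p).add i3
  refine ⟨(integrable_const _).add i4, ?_⟩
  rw [integral_add (integrable_const _) i4, integral_add (i1.const_mul p) i3,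
    integral_add (i2.const_mul q) iq, integral_const_mul, integral_const_mul, z1, z2]
  simp

/-- The projection of a support point on `e_φ` is at most the half-width of the ellipse. -/
lemma msupport_dot_le (hs0 : 0 < s) (hs1 : s < 1) (ha : 0 < a) (hb : 0 < b) {x : ℝ × ℝ}
    (hx : x ∈ msupport (rhoAB s a b)) (φ : ℝ) :
    |x.1 * Real.cos φ + x.2 * Real.sin φ| ≤
      √(a ^ 2 * Real.cos φ ^ 2 + b ^ 2 * Real.sin φ ^ 2) * R2 s := by
  have hR := R2_pos hs0 hs1
  have hcl : IsClosed {y : ℝ × ℝ | y.1 ^ 2 / a ^ 2 + y.2 ^ 2 / b ^ 2 ≤ R2 s ^ 2} :=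
    isClosed_le (by fun_prop) (by fun_prop)
  have hmem : x.1 ^ 2 / a ^ 2 + x.2 ^ 2 / b ^ 2 ≤ R2 s ^ 2 := by
    by_contra hne
    have := hx _ (hcl.isOpen_compl.mem_nhds hne)
    rw [rhoAB_compl hs0 ha hb] at this
    exact lt_irrefl _ this
  refine abs_le_of_sq_le_sq ?_ (by positivity)
  rw [mul_pow, Real.sq_sqrt (by positivity)]
  -- the Cauchy–Schwarz inequality for `(x₁/a, x₂/b)` and `(a cos φ, b sin φ)`
  set u := x.1 / a with hu
  set v := x.2 / b with hv
  have hxu : x.1 = a * u := by rw [hu]; field_simp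
  have hxv : x.2 = b * v := by rw [hv]; field_simp
  rw [← div_pow, ← div_pow, ← hu, ← hv] at hmem
  rw [hxu, hxv]
  have h1 : (a * u * Real.cos φ + b * v * Real.sin φ) ^ 2 ≤
      (a ^ 2 * Real.cos φ ^ 2 + b ^ 2 * Real.sin φ ^ 2) * (u ^ 2 + v ^ 2) := by
    nlinarith [sq_nonneg (a * Real.cos φ * v - b * Real.sin φ * u)]
  exact h1.trans (mul_le_mul_of_nonneg_left hmem (by positivity))

end rhoAB

/-! ### Superposition of one-dimensional potentials -/

section superposition

variable {s a b : ℝ} {Ω : ℝ → ℝ}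

lemma dot_eq_nrm_mul_cos (z : ℝ × ℝ) (φ : ℝ) :
    z.1 * Real.cos φ + z.2 * Real.sin φ = nrm z * Real.cos (φ - ang z) := by
  have hn : ‖(⟨z.1, z.2⟩ : ℂ)‖ = nrm z := by
    rw [Complex.norm_eq_sqrt_sq_add_sq]; rfl
  have h1 := Complex.norm_mul_cos_arg ⟨z.1, z.2⟩
  have h2 := Complex.norm_mul_sin_arg ⟨z.1, z.2⟩
  rw [hn] at h1 h2
  simp only at h1 h2
  have e1 : Real.cos (ang z) = Real.cos (Complex.arg ⟨z.1, z.2⟩) := by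
    unfold ang; split_ifs with h
    · rw [h, Real.cos_neg]
    · rfl
  have e2 : Real.sin (ang z) = Real.sin (Complex.arg ⟨z.1, z.2⟩) := by
    unfold ang; split_ifs with h
    · rw [h, Real.sin_neg, Real.sin_pi, neg_zero]
    · rfl
  rw [Real.cos_sub, e1, e2]
  linear_combination -Real.cos φ * h1 - Real.sin φ * h2

/-- The anisotropic kernel is a superposition over directions of one-dimensional Riesz kernels. -/
lemma kernel_eq (hs0 : 0 < s) (hs1 : s < 1) (hΩ : SatisfiesH Ω) (z : ℝ × ℝ) :
    nrm z ^ (-s) * Ω (ang z) = tauC s * ∫ φ in (-π)..π,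
      |z.1 * Real.cos φ + z.2 * Real.sin φ| ^ (-s) * Omt s Ω φ := by
  rw [inversion hs0 hs1 hΩ (ang z), mul_left_comm, ← intervalIntegral.integral_const_mul]
  have hn : 0 ≤ nrm z := Real.sqrt_nonneg _
  simp only [dot_eq_nrm_mul_cos, abs_mul, abs_of_nonneg hn, Real.mul_rpow hn (abs_nonneg _),
    mul_assoc]

/-- The half-width in the direction `e_φ` of the ellipse with semi-axes `a` and `b`. -/
def kap (a b φ : ℝ) : ℝ := √(a ^ 2 * Real.cos φ ^ 2 + b ^ 2 * Real.sin φ ^ 2)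

lemma radicand_pos (ha : 0 < a) (hb : 0 < b) (φ : ℝ) :
    0 < a ^ 2 * Real.cos φ ^ 2 + b ^ 2 * Real.sin φ ^ 2 := by
  rcases eq_or_ne (Real.cos φ) 0 with h | h
  · have := Real.sin_sq_add_cos_sq φ
    rw [h] at this ⊢
    have h2 : Real.sin φ ^ 2 = 1 := by linarith
    rw [h2]; positivity
  · have := sq_nonneg (Real.sin φ); positivity

lemma kap_pos (ha : 0 < a) (hb : 0 < b) (φ : ℝ) : 0 < kap a b φ :=
  Real.sqrt_pos.2 (radicand_pos ha hb φ)

lemma kap_sq (ha : 0 < a) (hb : 0 < b) (φ : ℝ) :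
    kap a b φ ^ 2 = a ^ 2 * Real.cos φ ^ 2 + b ^ 2 * Real.sin φ ^ 2 :=
  Real.sq_sqrt (radicand_pos ha hb φ).le

lemma continuous_kap : Continuous (kap a b) := by unfold kap; fun_prop

lemma continuous_kap_rpow (ha : 0 < a) (hb : 0 < b) (p : ℝ) :
    Continuous fun φ => kap a b φ ^ p :=
  continuous_kap.rpow_const fun φ => Or.inl (ne_of_gt (kap_pos ha hb φ))

/-- The potential of `ρ_{a,b}` for the one-dimensional Riesz kernel in the direction `e_φ`. -/
def dirPot (s a b : ℝ) (x : ℝ × ℝ) (φ : ℝ) : ℝ≥0∞ :=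
  ∫⁻ y, ENNReal.ofReal
    (|(x.1 - y.1) * Real.cos φ + (x.2 - y.2) * Real.sin φ| ^ (-s)) ∂(rhoAB s a b)

/-- The projection of `ρ_{a,b}` in the direction `e_φ` is that of `ρ₂` scaled by `kap a b φ`. -/
lemma dirPot_eq (hs0 : 0 < s) (hs1 : s < 1) (ha : 0 < a) (hb : 0 < b) (x : ℝ × ℝ) (φ : ℝ) :
    dirPot s a b x φ =
      ENNReal.ofReal (C2 s * BetaR (1 / 2) (1 + s / 2) * R2 s ^ 2 * kap a b φ ^ (-s)) *
      potF s ((x.1 * Real.cos φ + x.2 * Real.sin φ) / (kap a b φ * R2 s)) := by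
  have hR := R2_pos hs0 hs1
  have hC := C2_pos hs0 hs1
  have hB := BetaR_pos (x := 1 / 2) (y := 1 + s / 2) (by norm_num) (by linarith)
  have hk := kap_pos ha hb φ
  have hk2 := kap_sq ha hb φ
  set κ := kap a b φ
  set c := x.1 * Real.cos φ + x.2 * Real.sin φ with hc
  -- polar coordinates of the vector `(a cos φ, b sin φ)`, whose norm is `κ`
  obtain ⟨α, h1, h2⟩ : ∃ α, κ * Real.cos α = a * Real.cos φ ∧ κ * Real.sin α = b * Real.sin φ := by
    have hn : ‖(⟨a * Real.cos φ, b * Real.sin φ⟩ : ℂ)‖ = κ := by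
      rw [Complex.norm_eq_sqrt_sq_add_sq]
      simp only [mul_pow, ← hk2, Real.sqrt_sq hk.le]
    refine ⟨Complex.arg ⟨a * Real.cos φ, b * Real.sin φ⟩, ?_, ?_⟩
    · rw [← hn, Complex.norm_mul_cos_arg]
    · rw [← hn, Complex.norm_mul_sin_arg]
  have e1 : ∀ p : ℝ × ℝ, (x.1 - a * p.1) * Real.cos φ + (x.2 - b * p.2) * Real.sin φ =
      c - κ * (p.1 * Real.cos α + p.2 * Real.sin α) := by
    intro p; rw [hc]; linear_combination p.1 * h1 + p.2 * h2
  unfold dirPot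
  rw [lintegral_rhoAB (by fun_prop)]
  simp only [e1]
  rw [lintegral_rho2_proj hs0 hs1 α (h := fun v => ENNReal.ofReal (|c - κ * v| ^ (-s)))
    (by fun_prop)]
  have e2 : ∀ u : ℝ, ENNReal.ofReal ((1 - u ^ 2) ^ ((1 + s) / 2)) *
      ENNReal.ofReal (|c - κ * (R2 s * u)| ^ (-s)) = ENNReal.ofReal ((κ * R2 s) ^ (-s)) *
      ENNReal.ofReal ((1 - u ^ 2) ^ ((1 + s) / 2) * |c / (κ * R2 s) - u| ^ (-s)) := by
    intro u
    have e3 : c - κ * (R2 s * u) = κ * R2 s * (c / (κ * R2 s) - u) := by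
      field_simp
    rw [e3, abs_mul, abs_of_pos (by positivity), Real.mul_rpow (by positivity) (abs_nonneg _),
      ENNReal.ofReal_mul (by positivity), mul_left_comm,
      ENNReal.ofReal_mul' (Real.rpow_nonneg (abs_nonneg _) _)]
  simp only [e2]
  rw [lintegral_const_mul' _ _ ENNReal.ofReal_ne_top, ← mul_assoc,
    ← ENNReal.ofReal_mul (by positivity)]
  unfold potF
  congr 2
  rw [Real.mul_rpow hk.le hR.le, Real.rpow_add hR, Real.rpow_neg hR.le s]
  have : 0 < R2 s ^ s := by positivity
  rw [Real.rpow_two]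
  field_simp

/-- The common constant in the formula for the directional potentials. -/
def potConst (s : ℝ) : ℝ := C2 s * BetaR (1 / 2) (1 + s / 2) * R2 s ^ 2 *
  ((1 + s) * (π / Real.cos (s * π / 2)) / 2)

lemma dirPot_le (hs0 : 0 < s) (hs1 : s < 1) (ha : 0 < a) (hb : 0 < b) (x : ℝ × ℝ) (φ : ℝ) :
    dirPot s a b x φ ≤ ENNReal.ofReal (potConst s * kap a b φ ^ (-s)) := by
  have hC := C2_pos hs0 hs1
  have hB := BetaR_pos (x := 1 / 2) (y := 1 + s / 2) (by norm_num) (by linarith)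
  have hk := kap_pos ha hb φ
  rw [dirPot_eq hs0 hs1 ha hb]
  refine (mul_le_mul_right (potF_le hs0 hs1) _).trans ?_
  rw [← ENNReal.ofReal_mul (by positivity)]
  apply ENNReal.ofReal_le_ofReal
  unfold potConst
  apply le_of_eq; ring

/-- The quadratic coefficient of the directional potentials is the factor
`(R₁/R₂)^{2+s}` occurring in the coefficients of the confinement. -/
lemma potConst_mul (hs0 : 0 < s) (hs1 : s < 1) :
    potConst s * s = (R1 s / R2 s) ^ (2 + s) * R2 s ^ 2 := by
  have hc := cos_half_pos hs0 hs1
  have hp := Real.pi_pos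
  rw [ratio_rpow hs0 hs1, potConst, C1]
  generalize BetaR (1 / 2) (1 + s / 2) = B
  field_simp
  ring

/-- Adding the directional confinement to the directional potential cancels the quadratic term
inside the ellipse, and leaves at least the same constant elsewhere. -/
lemma dirPot_ge (hs0 : 0 < s) (hs1 : s < 1) (ha : 0 < a) (hb : 0 < b) (x : ℝ × ℝ) (φ : ℝ) :
    potConst s * kap a b φ ^ (-s) ≤ (dirPot s a b x φ).toReal +
      (R1 s / R2 s) ^ (2 + s) * kap a b φ ^ (-(2 + s)) *
        (x.1 * Real.cos φ + x.2 * Real.sin φ) ^ 2 ∧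
    (|x.1 * Real.cos φ + x.2 * Real.sin φ| ≤ kap a b φ * R2 s →
      (dirPot s a b x φ).toReal + (R1 s / R2 s) ^ (2 + s) * kap a b φ ^ (-(2 + s)) *
        (x.1 * Real.cos φ + x.2 * Real.sin φ) ^ 2 = potConst s * kap a b φ ^ (-s)) := by
  have hR := R2_pos hs0 hs1
  have hC := C2_pos hs0 hs1
  have hB := BetaR_pos (x := 1 / 2) (y := 1 + s / 2) (by norm_num) (by linarith)
  have hk := kap_pos ha hb φ
  have hmul := potConst_mul hs0 hs1
  rw [dirPot_eq hs0 hs1 ha hb, ENNReal.toReal_mul, ENNReal.toReal_ofReal (by positivity)]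
  have e1 : kap a b φ ^ (-(2 + s)) = kap a b φ ^ (-s) / kap a b φ ^ 2 := by
    rw [← Real.rpow_two, ← Real.rpow_sub hk]; congr 1; ring
  rw [e1]
  set κ := kap a b φ
  set c := x.1 * Real.cos φ + x.2 * Real.sin φ
  set k0 := (1 + s) * (π / Real.cos (s * π / 2)) / 2 with hk0
  have hpc : potConst s = C2 s * BetaR (1 / 2) (1 + s / 2) * R2 s ^ 2 * k0 := rfl
  have key : C2 s * BetaR (1 / 2) (1 + s / 2) * R2 s ^ 2 * κ ^ (-s) *
      (k0 * (1 - s * (c / (κ * R2 s)) ^ 2)) + (R1 s / R2 s) ^ (2 + s) * (κ ^ (-s) / κ ^ 2) * c ^ 2 =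
      potConst s * κ ^ (-s) := by
    have e2 : (R1 s / R2 s) ^ (2 + s) = potConst s * s / R2 s ^ 2 := by
      rw [hmul]; field_simp
    rw [e2, hpc]
    generalize BetaR (1 / 2) (1 + s / 2) = B
    field_simp
    ring
  constructor
  · rw [← key]
    gcongr
    exact potF_ge hs0 hs1
  · intro h
    rw [← key, potF_inside hs0 hs1]
    rw [abs_div, abs_of_pos (show 0 < κ * R2 s by positivity)]
    exact (div_le_one (by positivity)).2 h

end superposition

/-! ### The potential of `ρ_{a,b}` -/

section potential

variable {s a b : ℝ} {Ω : ℝ → ℝ}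

lemma tauC_pos (hs0 : 0 < s) (hs1 : s < 1) : 0 < tauC s := by
  have h1 := cos_half_pos hs0 hs1
  have h2 := Real.Gamma_pos_of_pos hs0
  have := Real.pi_pos
  unfold tauC; positivity

/-- Integrability for Fubini: `Ω̃` and the directional potentials are bounded. -/
lemma integrable_superposition (hs0 : 0 < s) (hs1 : s < 1) (hΩ : SatisfiesH Ω) (ha : 0 < a)
    (hb : 0 < b) (x : ℝ × ℝ) :
    Integrable (Function.uncurry fun (y : ℝ × ℝ) (φ : ℝ) =>
      |(x.1 - y.1) * Real.cos φ + (x.2 - y.2) * Real.sin φ| ^ (-s) * Omt s Ω φ)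
      ((rhoAB s a b).prod (volume.restrict (Ioc (-π) π))) := by
  have := isProbabilityMeasure_rhoAB (a := a) (b := b) hs0 hs1
  have hcont := Omt_continuous hs0 hΩ
  obtain ⟨C, hC0, hC⟩ := exists_Omt_bound hs0 hΩ
  have hG : Integrable (Function.uncurry fun (y : ℝ × ℝ) (φ : ℝ) =>
      |(x.1 - y.1) * Real.cos φ + (x.2 - y.2) * Real.sin φ| ^ (-s))
      ((rhoAB s a b).prod (volume.restrict (Ioc (-π) π))) := by
    have hm : Measurable (Function.uncurry fun (y : ℝ × ℝ) (φ : ℝ) =>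
        |(x.1 - y.1) * Real.cos φ + (x.2 - y.2) * Real.sin φ| ^ (-s)) := by
      unfold Function.uncurry; fun_prop
    refine ⟨hm.aestronglyMeasurable, ?_⟩
    have h0 : ∀ p : (ℝ × ℝ) × ℝ, 0 ≤ Function.uncurry (fun (y : ℝ × ℝ) (φ : ℝ) =>
        |(x.1 - y.1) * Real.cos φ + (x.2 - y.2) * Real.sin φ| ^ (-s)) p :=
      fun p => Real.rpow_nonneg (abs_nonneg _) _
    rw [hasFiniteIntegral_iff_ofReal (.of_forall h0),
      lintegral_prod_symm _ hm.ennreal_ofReal.aemeasurable]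
    have hk : IntegrableOn (fun φ => potConst s * kap a b φ ^ (-s)) (Ioc (-π) π) :=
      ((continuous_kap_rpow ha hb (-s)).const_mul _).integrableOn_Ioc
    exact (lintegral_mono fun φ => dirPot_le hs0 hs1 ha hb x φ).trans_lt hk.lintegral_lt_top
  refine hG.mul_bdd (c := C) ?_ (.of_forall fun p => hC p.2)
  exact (hcont.comp continuous_snd).aestronglyMeasurable

lemma integral_dirPot (x : ℝ × ℝ) (φ : ℝ) :
    ∫ y, |(x.1 - y.1) * Real.cos φ + (x.2 - y.2) * Real.sin φ| ^ (-s) ∂(rhoAB s a b) =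
      (dirPot s a b x φ).toReal := by
  rw [integral_eq_lintegral_of_nonneg_ae (.of_forall fun y => Real.rpow_nonneg (abs_nonneg _) _)
    (Measurable.aestronglyMeasurable (by fun_prop))]
  rfl

lemma intervalIntegrable_dirPot (hs0 : 0 < s) (hs1 : s < 1) (hΩ : SatisfiesH Ω) (ha : 0 < a)
    (hb : 0 < b) (x : ℝ × ℝ) :
    IntervalIntegrable (fun φ => (dirPot s a b x φ).toReal * Omt s Ω φ) volume (-π) π := by
  have := isProbabilityMeasure_rhoAB (a := a) (b := b) hs0 hs1
  have h := (integrable_superposition hs0 hs1 hΩ ha hb x).integral_prod_right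
  simp only [Function.uncurry, integral_mul_const, integral_dirPot] at h
  exact (intervalIntegrable_iff_integrableOn_Ioc_of_le (by linarith [Real.pi_pos])).2 h

lemma integral_kernel (hs0 : 0 < s) (hs1 : s < 1) (hΩ : SatisfiesH Ω) (ha : 0 < a)
    (hb : 0 < b) (x : ℝ × ℝ) :
    Integrable (fun y => nrm (x - y) ^ (-s) * Ω (ang (x - y))) (rhoAB s a b) ∧
    ∫ y, nrm (x - y) ^ (-s) * Ω (ang (x - y)) ∂(rhoAB s a b) =
      tauC s * ∫ φ in (-π)..π, (dirPot s a b x φ).toReal * Omt s Ω φ := by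
  have := isProbabilityMeasure_rhoAB (a := a) (b := b) hs0 hs1
  have hI := integrable_superposition hs0 hs1 hΩ ha hb x
  have hle : -π ≤ π := by linarith [Real.pi_pos]
  simp only [kernel_eq hs0 hs1 hΩ, Prod.fst_sub, Prod.snd_sub, intervalIntegral.integral_of_le hle]
  refine ⟨hI.integral_prod_left.const_mul _, ?_⟩
  rw [integral_const_mul, integral_integral_swap hI]
  simp only [integral_mul_const, integral_dirPot]

/-- The confinement is the superposition over directions of one-dimensional quadratic ones. -/
lemma quad_eq (hs0 : 0 < s) (hΩ : SatisfiesH Ω) (ha : 0 < a) (hb : 0 < b) (x : ℝ × ℝ) :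
    Acoef s Ω a b * x.1 ^ 2 + Bcoef s Ω a b * x.2 ^ 2 + 2 * Dcoef s Ω a b * x.1 * x.2 =
      tauC s * ∫ φ in (-π)..π, (R1 s / R2 s) ^ (2 + s) * kap a b φ ^ (-(2 + s)) *
        (x.1 * Real.cos φ + x.2 * Real.sin φ) ^ 2 * Omt s Ω φ := by
  have hcont := Omt_continuous hs0 hΩ
  have hk := continuous_kap_rpow ha hb (-(2 + s))
  have e : ∀ φ, (a ^ 2 * Real.cos φ ^ 2 + b ^ 2 * Real.sin φ ^ 2) ^ (-(2 + s) / 2) =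
      kap a b φ ^ (-(2 + s)) := by
    intro φ
    rw [← kap_sq ha hb, ← Real.rpow_two, ← Real.rpow_mul (kap_pos ha hb φ).le]
    congr 1; ring
  unfold Acoef Bcoef Dcoef
  simp only [e]
  set r := (R1 s / R2 s) ^ (2 + s)
  have e2 : ∀ φ, r * kap a b φ ^ (-(2 + s)) * (x.1 * Real.cos φ + x.2 * Real.sin φ) ^ 2 *
      Omt s Ω φ = r * x.1 ^ 2 * (kap a b φ ^ (-(2 + s)) * Real.cos φ ^ 2 * Omt s Ω φ) +
        (r * x.2 ^ 2 * (kap a b φ ^ (-(2 + s)) * Real.sin φ ^ 2 * Omt s Ω φ) +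
        2 * r * x.1 * x.2 * (kap a b φ ^ (-(2 + s)) * (Real.cos φ * Real.sin φ) * Omt s Ω φ)) := by
    intro φ; ring
  simp only [e2]
  rw [intervalIntegral.integral_add, intervalIntegral.integral_add,
    intervalIntegral.integral_const_mul, intervalIntegral.integral_const_mul,
    intervalIntegral.integral_const_mul]
  · ring
  all_goals exact Continuous.intervalIntegrable (by fun_prop) _ _

/-- The total potential is, up to an additive constant, the superposition over directions of the
one-dimensional total potentials. -/
lemma total_potential (hs0 : 0 < s) (hs1 : s < 1) (hΩ : SatisfiesH Ω) (ha : 0 < a)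
    (hb : 0 < b) (x : ℝ × ℝ) :
    IntervalIntegrable (fun φ => ((dirPot s a b x φ).toReal + (R1 s / R2 s) ^ (2 + s) *
        kap a b φ ^ (-(2 + s)) * (x.1 * Real.cos φ + x.2 * Real.sin φ) ^ 2) * Omt s Ω φ)
      volume (-π) π ∧
    ∫ y, (nrm (x - y) ^ (-s) * Ω (ang (x - y)) +
        Acoef s Ω a b * (x.1 - y.1) ^ 2 + Bcoef s Ω a b * (x.2 - y.2) ^ 2 +
        2 * Dcoef s Ω a b * (x.1 - y.1) * (x.2 - y.2)) ∂(rhoAB s a b) =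
      (tauC s * ∫ φ in (-π)..π, ((dirPot s a b x φ).toReal + (R1 s / R2 s) ^ (2 + s) *
        kap a b φ ^ (-(2 + s)) * (x.1 * Real.cos φ + x.2 * Real.sin φ) ^ 2) * Omt s Ω φ) +
      ∫ y, (Acoef s Ω a b * y.1 ^ 2 + Bcoef s Ω a b * y.2 ^ 2 +
        2 * Dcoef s Ω a b * y.1 * y.2) ∂(rhoAB s a b) := by
  have hcont := Omt_continuous hs0 hΩ
  have hk := continuous_kap_rpow ha hb (-(2 + s))
  have i1 := intervalIntegrable_dirPot hs0 hs1 hΩ ha hb x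
  have i2 : IntervalIntegrable (fun φ => (R1 s / R2 s) ^ (2 + s) * kap a b φ ^ (-(2 + s)) *
        (x.1 * Real.cos φ + x.2 * Real.sin φ) ^ 2 * Omt s Ω φ) volume (-π) π :=
    Continuous.intervalIntegrable (by fun_prop) _ _
  obtain ⟨j1, k1⟩ := integral_kernel hs0 hs1 hΩ ha hb x
  obtain ⟨j2, k2⟩ := integral_quad_rhoAB hs0 hs1 ha hb (Acoef s Ω a b) (Bcoef s Ω a b)
    (Dcoef s Ω a b) x
  simp only [add_mul]
  refine ⟨i1.add i2, ?_⟩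
  rw [intervalIntegral.integral_add i1 i2, mul_add, ← quad_eq hs0 hΩ ha hb, ← k1, add_assoc, ← k2,
    ← integral_add j1 j2]
  refine integral_congr_ae (.of_forall fun y => ?_)
  simp only
  ring

end potential

/-- the potential generated by `ρ_{a,b}` together with the quadratic
correction with coefficients `A(a,b), B(a,b), D(a,b)` is constant on `supp ρ_{a,b}`;
moreover, if `Ω̃ ≥ 0`, it attains its global minimum there. -/
theorem statement6 (s : ℝ) (hs0 : 0 < s) (hs1 : s < 1) (Ω : ℝ → ℝ) (hΩ : SatisfiesH Ω)
    (a b : ℝ) (ha : 0 < a) (hb : 0 < b) :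
    ∃ C : ℝ,
      (∀ x ∈ msupport (rhoAB s a b),
        (∫ y, (nrm (x - y) ^ (-s) * Ω (ang (x - y)) +
            Acoef s Ω a b * (x.1 - y.1) ^ 2 + Bcoef s Ω a b * (x.2 - y.2) ^ 2 +
            2 * Dcoef s Ω a b * (x.1 - y.1) * (x.2 - y.2)) ∂(rhoAB s a b)) = C) ∧
      ((∀ φ, 0 ≤ Omt s Ω φ) → ∀ x : ℝ × ℝ,
        C ≤ ∫ y, (nrm (x - y) ^ (-s) * Ω (ang (x - y)) +
            Acoef s Ω a b * (x.1 - y.1) ^ 2 + Bcoef s Ω a b * (x.2 - y.2) ^ 2 +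
            2 * Dcoef s Ω a b * (x.1 - y.1) * (x.2 - y.2)) ∂(rhoAB s a b)) := by
  refine ⟨(tauC s * ∫ φ in (-π)..π, potConst s * kap a b φ ^ (-s) * Omt s Ω φ) +
      ∫ y, (Acoef s Ω a b * y.1 ^ 2 + Bcoef s Ω a b * y.2 ^ 2 +
        2 * Dcoef s Ω a b * y.1 * y.2) ∂(rhoAB s a b), fun x hx => ?_, fun hO x => ?_⟩
  · rw [(total_potential hs0 hs1 hΩ ha hb x).2]
    congr 2
    refine intervalIntegral.integral_congr fun φ _ => ?_
    rw [(dirPot_ge hs0 hs1 ha hb x φ).2 (msupport_dot_le hs0 hs1 ha hb hx φ)]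
  · obtain ⟨hi, he⟩ := total_potential hs0 hs1 hΩ ha hb x
    rw [he]
    have hcont := Omt_continuous hs0 hΩ
    have hk := continuous_kap_rpow ha hb (-s)
    refine add_le_add_left (mul_le_mul_of_nonneg_left ?_ (tauC_pos hs0 hs1).le) _
    refine intervalIntegral.integral_mono_on (by linarith [Real.pi_pos])
      (Continuous.intervalIntegrable (by fun_prop) _ _) hi fun φ _ => ?_
    exact mul_le_mul_of_nonneg_right (dirPot_ge hs0 hs1 ha hb x φ).1 (hO φ)

end Aniso
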